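/- arXiv:2508.03778 — 2 statements merged into one kernel-verified Lean document; each statement's English description precedes it below -/
import Mathlib

section
/- Let G be a connected non-complete graph of order n ≥ 18 with toughness t(G) ≥ 1. If ρ(G) ≥ ρ(M_n), then G contains a Hamiltonian cycle, unless G is isomorphic to M_n. -/
open SimpleGraph

/-- The number of connected components of `G - S`. -/
noncomputable def numComp {V : Type*} (G : SimpleGraph V) (S : Set V) : ℕ :=
  Nat.card (SimpleGraph.ConnectedComponent (SimpleGraph.induce Sᶜ G))

/-- `X, Y` form a bipartition of the graph `G`. -/
def IsBipartition {V : Type*} (G : SimpleGraph V) (X Y : Set V) : Prop :=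
  X ∪ Y = Set.univ ∧ Disjoint X Y ∧
    ∀ ⦃u v⦄, G.Adj u v → (u ∈ X ∧ v ∈ Y) ∨ (u ∈ Y ∧ v ∈ X)

/-- The bipartite toughness of `G` (with parts `X`, `Y`) is at least `1`:
`c(G - S) ≤ |S|` for every proper subset `S ⊂ X` (or `S ⊂ Y`) with `c(G - S) > 1`. -/
def BTough1 {V : Type*} (G : SimpleGraph V) (X Y : Set V) : Prop :=
  ∀ S : Set V, (S ⊂ X ∨ S ⊂ Y) → 1 < numComp G S → numComp G S ≤ S.ncard

/-- The toughness of a (non-complete) graph `G`. -/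
noncomputable def toughness {V : Type*} (G : SimpleGraph V) : ℝ :=
  sInf {x : ℝ | ∃ S : Set V, 1 < numComp G S ∧ x = (S.ncard : ℝ) / (numComp G S : ℝ)}

/-- The spectral radius of `G`: the largest eigenvalue of its adjacency matrix. -/
noncomputable def specRad {V : Type*} [Fintype V] (G : SimpleGraph V) : ℝ :=
  letI := Classical.decRel G.Adj
  sSup {μ : ℝ | Module.End.HasEigenvalue (Matrix.mulVecLin (G.adjMatrix ℝ)) μ}

/-- `G` has a 2-factor: a spanning subgraph in which every vertex has degree 2. -/
def Has2Factor {V : Type*} (G : SimpleGraph V) : Prop :=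
  ∃ F : SimpleGraph V, F ≤ G ∧ ∀ v, (F.neighborSet v).ncard = 2

/-- The graph `G_{n,n}`: parts `X = {u_1,…,u_n}` (left) and `Y = {v_1,…,v_n}` (right);
`u_i ~ v_j` for all `i` and all `j ≥ 4`; moreover `v_1, v_2, v_3` are joined to `u_1`,
and `v_i` is joined to `u_{i+1}` for `1 ≤ i ≤ 3` (indices here are 0-based). -/
def Gnn (n : ℕ) : SimpleGraph (Fin n ⊕ Fin n) :=
  SimpleGraph.fromRel fun a b =>
    match a, b with
    | Sum.inl i, Sum.inr j =>
        3 ≤ (j : ℕ) ∨ ((j : ℕ) < 3 ∧ ((i : ℕ) = 0 ∨ (i : ℕ) = (j : ℕ) + 1))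
    | _, _ => False

/-- The graph `M_n`: the complete graph on `{v_1,…,v_{n-3}}` (the vertices of index `< n-3`),
together with three vertices `u_1, u_2, u_3` (the vertices of index `≥ n-3`), each joined to
`v_1` (index `0`), and `u_i` joined to `v_{i+1}` for `1 ≤ i ≤ 3`. -/
def Mn (n : ℕ) : SimpleGraph (Fin n) :=
  SimpleGraph.fromRel fun a b =>
    ((a : ℕ) < n - 3 ∧ (b : ℕ) < n - 3) ∨
      (n - 3 ≤ (a : ℕ) ∧ ((b : ℕ) = 0 ∨ (b : ℕ) = (a : ℕ) - (n - 3) + 1))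

section Spectral

open Matrix Finset

theorem dotProduct_self_pos {V : Type*} [Fintype V] {x : V → ℝ} (hx : x ≠ 0) : 0 < x ⬝ᵥ x :=
  lt_of_le_of_ne (sum_nonneg fun _ _ => mul_self_nonneg _)
    fun h => hx (dotProduct_self_eq_zero.1 h.symm)

/-- A real symmetric matrix with nonnegative entries attains the maximum of its Rayleigh quotient
at a nonnegative eigenvector. -/
theorem Matrix.exists_nonneg_eigenvector_max {V : Type*} [Fintype V] [Nonempty V]
    (A : Matrix V V ℝ) (hA : A.IsSymm) (hpos : ∀ i j, 0 ≤ A i j) :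
    ∃ (r : ℝ) (x : V → ℝ), (∀ v, 0 ≤ x v) ∧ x ≠ 0 ∧ A *ᵥ x = r • x ∧
      ∀ y : V → ℝ, y ⬝ᵥ A *ᵥ y ≤ r * (y ⬝ᵥ y) := by
  classical
  let K : Set (V → ℝ) := {x | x ⬝ᵥ x = 1}
  have hcont : Continuous fun x : V → ℝ => x ⬝ᵥ A *ᵥ x := by
    simp only [dotProduct, mulVec]; fun_prop
  have hK : IsCompact K := by
    apply Metric.isCompact_of_isClosed_isBounded
    · exact isClosed_eq (by simp only [dotProduct]; fun_prop) continuous_const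
    · refine (Metric.isBounded_closedBall (x := (0 : V → ℝ)) (r := 1)).subset fun x hx => ?_
      rw [mem_closedBall_zero_iff, pi_norm_le_iff_of_nonneg zero_le_one]
      intro i
      have h1 : x i * x i ≤ x ⬝ᵥ x :=
        single_le_sum (f := fun i => x i * x i) (fun j _ => mul_self_nonneg _) (mem_univ i)
      rw [show x ⬝ᵥ x = 1 from hx] at h1
      rw [Real.norm_eq_abs]
      exact abs_le_one_iff_mul_self_le_one.2 h1
  obtain ⟨v₀⟩ := ‹Nonempty V›
  have hne : K.Nonempty := ⟨Pi.single v₀ 1, by simp [K]⟩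
  obtain ⟨z, hz, hmax⟩ := hK.exists_isMaxOn hne hcont.continuousOn
  let x : V → ℝ := fun v => |z v|
  have hxx : x ⬝ᵥ x = 1 := by
    have : x ⬝ᵥ x = z ⬝ᵥ z := by simp [dotProduct, x]
    rw [this]; exact hz
  let r := x ⬝ᵥ A *ᵥ x
  have hzr : z ⬝ᵥ A *ᵥ z ≤ r := by
    simp only [r, dotProduct, mulVec, mul_sum]
    refine sum_le_sum fun i _ => sum_le_sum fun j _ => ?_
    calc z i * (A i j * z j) ≤ |z i * (A i j * z j)| := le_abs_self _
      _ = x i * (A i j * x j) := by rw [abs_mul, abs_mul, abs_of_nonneg (hpos i j)]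
  have hray : ∀ y : V → ℝ, y ⬝ᵥ A *ᵥ y ≤ r * (y ⬝ᵥ y) := by
    intro y
    by_cases hy : y = 0
    · simp [hy]
    have hyp := dotProduct_self_pos hy
    have hs : (√(y ⬝ᵥ y))⁻¹ * ((√(y ⬝ᵥ y))⁻¹) = (y ⬝ᵥ y)⁻¹ := by
      rw [← mul_inv, Real.mul_self_sqrt hyp.le]
    have h1 : (√(y ⬝ᵥ y))⁻¹ • y ∈ K := by
      change _ = _
      rw [smul_dotProduct, dotProduct_smul, smul_smul, hs, smul_eq_mul, inv_mul_cancel₀ hyp.ne']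
    have h2 := (hmax h1).trans hzr
    simp only [mulVec_smul, smul_dotProduct, dotProduct_smul, smul_eq_mul] at h2
    rwa [← mul_assoc, hs, inv_mul_le_iff₀ hyp, mul_comm] at h2
  refine ⟨r, x, fun v => abs_nonneg _, ?_, ?_, hray⟩
  · intro h; simp [h] at hxx
  · have hB : (r • (1 : Matrix V V ℝ) - A).PosSemidef := by
      refine PosSemidef.of_dotProduct_mulVec_nonneg ?_ fun y => ?_
      · rw [IsHermitian, conjTranspose_eq_transpose_of_trivial]
        simp [hA.eq]
      · have := hray y
        simp only [star_trivial, sub_mulVec, smul_mulVec, one_mulVec, dotProduct_sub,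
          dotProduct_smul, smul_eq_mul]
        linarith
    have h0 : star x ⬝ᵥ (r • (1 : Matrix V V ℝ) - A) *ᵥ x = 0 := by
      simp only [star_trivial, sub_mulVec, smul_mulVec, one_mulVec, dotProduct_sub,
        dotProduct_smul, smul_eq_mul, hxx]
      simp [r]
    rw [hB.dotProduct_mulVec_zero_iff] at h0
    simp only [sub_mulVec, smul_mulVec, one_mulVec, sub_eq_zero] at h0
    exact h0.symm

theorem exists_perron_vector {V : Type*} [Fintype V] [Nonempty V] (G : SimpleGraph V)
    [DecidableRel G.Adj] :
    ∃ x : V → ℝ, (∀ v, 0 ≤ x v) ∧ x ≠ 0 ∧ G.adjMatrix ℝ *ᵥ x = specRad G • x ∧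
      ∀ y : V → ℝ, y ⬝ᵥ G.adjMatrix ℝ *ᵥ y ≤ specRad G * (y ⬝ᵥ y) := by
  obtain ⟨r, x, hx, hx0, hAx, hray⟩ := Matrix.exists_nonneg_eigenvector_max (G.adjMatrix ℝ)
    (G.isSymm_adjMatrix) (fun i j => by rw [SimpleGraph.adjMatrix_apply]; split_ifs <;> simp)
  have hr : specRad G = r := by
    unfold specRad
    refine IsGreatest.csSup_eq ⟨?_, ?_⟩
    · refine Module.End.hasEigenvalue_of_hasEigenvector (x := x) ⟨?_, hx0⟩
      rw [Module.End.mem_eigenspace_iff, mulVecLin_apply, ← hAx]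
      congr!
    · rintro μ hμ
      obtain ⟨y, hy, hy0⟩ := hμ.exists_hasEigenvector
      rw [Module.End.mem_eigenspace_iff, mulVecLin_apply] at hy
      have hy' : G.adjMatrix ℝ *ᵥ y = μ • y := by rw [← hy]; congr!
      have h1 := hray y
      rw [hy', dotProduct_smul, smul_eq_mul] at h1
      exact le_of_mul_le_mul_right h1 (dotProduct_self_pos hy0)
  exact ⟨x, hx, hx0, hr ▸ hAx, hr ▸ hray⟩

theorem adjMatrix_quadratic {V : Type*} [Fintype V] (G : SimpleGraph V) [DecidableRel G.Adj]
    (y : V → ℝ) :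
    y ⬝ᵥ G.adjMatrix ℝ *ᵥ y = ∑ i, ∑ j, if G.Adj i j then y i * y j else 0 := by
  simp only [dotProduct, mulVec, SimpleGraph.adjMatrix_apply, mul_sum]
  refine sum_congr rfl fun i _ => sum_congr rfl fun j _ => ?_
  split_ifs <;> simp

theorem adjMatrix_quadratic_mono {V : Type*} [Fintype V] {G H : SimpleGraph V}
    [DecidableRel G.Adj] [DecidableRel H.Adj] (h : G ≤ H) {y : V → ℝ} (hy : ∀ v, 0 ≤ y v) :
    y ⬝ᵥ G.adjMatrix ℝ *ᵥ y ≤ y ⬝ᵥ H.adjMatrix ℝ *ᵥ y := by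
  rw [adjMatrix_quadratic, adjMatrix_quadratic]
  refine sum_le_sum fun i _ => sum_le_sum fun j _ => ?_
  have := mul_nonneg (hy i) (hy j)
  by_cases hG : G.Adj i j
  · simp [hG, h hG]
  · simp only [hG, if_false]; split_ifs <;> simp [this]

theorem specRad_mono {V : Type*} [Fintype V] [Nonempty V] {G H : SimpleGraph V} (h : G ≤ H) :
    specRad G ≤ specRad H := by
  classical
  obtain ⟨x, hx, hx0, hAx, -⟩ := exists_perron_vector G
  obtain ⟨-, -, -, -, hray⟩ := exists_perron_vector H
  have h1 := (adjMatrix_quadratic_mono h hx).trans (hray x)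
  rw [hAx, dotProduct_smul, smul_eq_mul] at h1
  exact le_of_mul_le_mul_right h1 (dotProduct_self_pos hx0)

/-- A nonnegative nonzero eigenvector of a connected graph is positive. -/
theorem SimpleGraph.Connected.eigenvector_pos {V : Type*} [Fintype V] {G : SimpleGraph V}
    [DecidableRel G.Adj] (hG : G.Connected) {x : V → ℝ} {r : ℝ} (hx : ∀ v, 0 ≤ x v) (hx0 : x ≠ 0)
    (hAx : G.adjMatrix ℝ *ᵥ x = r • x) (v : V) : 0 < x v := by
  by_contra hv
  have hv0 : x v = 0 := le_antisymm (not_lt.1 hv) (hx v)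
  have step : ∀ a b, G.Adj a b → x a = 0 → x b = 0 := by
    intro a b hab ha
    have h1 := congrFun hAx a
    rw [SimpleGraph.adjMatrix_mulVec_apply, Pi.smul_apply, ha, smul_zero,
      sum_eq_zero_iff_of_nonneg fun i _ => hx i] at h1
    exact h1 b (by simpa using hab)
  have all : ∀ a b, G.Walk a b → x a = 0 → x b = 0 := by
    intro a b p
    induction p with
    | nil => exact id
    | cons h _ ih => exact fun ha => ih (step _ _ h ha)
  exact hx0 (funext fun w => all v w (hG.preconnected v w).some hv0)

theorem specRad_lt_of_lt {V : Type*} [Fintype V] {G H : SimpleGraph V} (hG : G.Connected)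
    (h : G < H) : specRad G < specRad H := by
  classical
  have := hG.nonempty
  obtain ⟨x, hx, hx0, hAx, -⟩ := exists_perron_vector G
  obtain ⟨-, -, -, -, hray⟩ := exists_perron_vector H
  have hpos := hG.eigenvector_pos hx hx0 hAx
  obtain ⟨a, b, hab, hnab⟩ : ∃ a b, H.Adj a b ∧ ¬ G.Adj a b := by
    by_contra! hcon
    exact h.not_ge fun a b => hcon a b
  have h1 : x ⬝ᵥ G.adjMatrix ℝ *ᵥ x < x ⬝ᵥ H.adjMatrix ℝ *ᵥ x := by
    rw [adjMatrix_quadratic, adjMatrix_quadratic]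
    have key : ∀ i j, (if G.Adj i j then x i * x j else 0) ≤
        if H.Adj i j then x i * x j else 0 := by
      intro i j
      have := mul_nonneg (hx i) (hx j)
      by_cases hG : G.Adj i j
      · simp [hG, h.le hG]
      · simp only [hG, if_false]; split_ifs <;> simp [this]
    refine sum_lt_sum (fun i _ => sum_le_sum fun j _ => key i j) ⟨a, mem_univ _, ?_⟩
    refine sum_lt_sum (fun j _ => key a j) ⟨b, mem_univ _, ?_⟩
    simpa [hab, hnab] using mul_pos (hpos a) (hpos b)
  have h2 := h1.trans_le (hray x)
  rw [hAx, dotProduct_smul, smul_eq_mul] at h2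
  exact lt_of_mul_lt_mul_right h2 (dotProduct_self_pos hx0).le

theorem specRad_le_of_iso {V W : Type*} [Fintype V] [Fintype W] [Nonempty V] {G : SimpleGraph V}
    {H : SimpleGraph W} (e : G ≃g H) : specRad G ≤ specRad H := by
  classical
  have : Nonempty W := e.symm.surjective.nonempty
  obtain ⟨x, hx, hx0, hAx, -⟩ := exists_perron_vector G
  obtain ⟨-, -, -, -, hray⟩ := exists_perron_vector H
  have h1 := hray (x ∘ e.symm)
  have h2 : (x ∘ e.symm) ⬝ᵥ (x ∘ e.symm) = x ⬝ᵥ x :=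
    e.symm.toEquiv.sum_comp fun i => x i * x i
  have h3 : (x ∘ e.symm) ⬝ᵥ H.adjMatrix ℝ *ᵥ (x ∘ e.symm) = x ⬝ᵥ G.adjMatrix ℝ *ᵥ x := by
    rw [adjMatrix_quadratic, adjMatrix_quadratic, ← e.toEquiv.sum_comp]
    refine sum_congr rfl fun i _ => ?_
    rw [← e.toEquiv.sum_comp]
    refine sum_congr rfl fun j _ => ?_
    have hadj : H.Adj (e.toEquiv i) (e.toEquiv j) ↔ G.Adj i j := e.map_adj_iff
    have hs : ∀ k, e.symm (e.toEquiv k) = k := e.symm_apply_apply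
    simp only [hadj, Function.comp_apply, hs]
  rw [h2, h3, hAx, dotProduct_smul, smul_eq_mul] at h1
  exact le_of_mul_le_mul_right h1 (dotProduct_self_pos hx0)

/-- Upper bound for the spectral radius in terms of the degree sum and a lower bound
on the degrees. -/
theorem specRad_sq_le {V : Type*} [Fintype V] [Nonempty V] (G : SimpleGraph V)
    [DecidableRel G.Adj] (d : ℕ) (hdeg : ∀ v, d ≤ G.degree v) :
    specRad G ^ 2 - ((d : ℝ) - 1) * specRad G ≤
      (∑ v, (G.degree v : ℝ)) - d * ((Fintype.card V : ℝ) - 1) := by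
  classical
  obtain ⟨x, hx, hx0, hAx, -⟩ := exists_perron_vector G
  set r := specRad G
  have hsum : ∀ f : V → ℝ, ∑ v, f v * (r * x v) = ∑ w, x w * ∑ v ∈ G.neighborFinset w, f v := by
    intro f
    have : ∀ v, r * x v = ∑ w, if G.Adj v w then x w else 0 := by
      intro v
      have := congrFun hAx v
      rw [SimpleGraph.adjMatrix_mulVec_apply, Pi.smul_apply, smul_eq_mul] at this
      rw [← this, ← sum_filter, SimpleGraph.neighborFinset_eq_filter]
    simp only [this, mul_sum]
    rw [sum_comm]
    refine sum_congr rfl fun w _ => ?_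
    rw [SimpleGraph.neighborFinset_eq_filter, sum_filter]
    refine sum_congr rfl fun v _ => ?_
    simp only [G.adj_comm v w]
    split_ifs <;> ring
  have h1 : r * ∑ v, x v = ∑ w, x w * G.degree w := by
    have := hsum fun _ => 1
    simpa [mul_sum] using this
  have h2 : r * (r * ∑ v, x v) = ∑ w, x w * ∑ v ∈ G.neighborFinset w, (G.degree v : ℝ) := by
    rw [← hsum, h1, mul_sum]
    exact sum_congr rfl fun v _ => by ring
  set D := ∑ v, (G.degree v : ℝ)
  have key : ∀ w, ∑ v ∈ G.neighborFinset w, (G.degree v : ℝ) ≤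
      D - d * ((Fintype.card V : ℝ) - 1) + ((d : ℝ) - 1) * G.degree w := by
    intro w
    have hw : w ∉ G.neighborFinset w := by simp
    have hsplit : D = ∑ v ∈ G.neighborFinset w, (G.degree v : ℝ) + G.degree w +
        ∑ v ∈ (insert w (G.neighborFinset w))ᶜ, (G.degree v : ℝ) := by
      simp only [D]
      rw [← sum_add_sum_compl (insert w (G.neighborFinset w)), sum_insert hw]; ring
    have hlow : ((insert w (G.neighborFinset w))ᶜ.card : ℝ) * d ≤
        ∑ v ∈ (insert w (G.neighborFinset w))ᶜ, (G.degree v : ℝ) := by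
      rw [← nsmul_eq_mul]
      exact card_nsmul_le_sum _ _ _ fun v _ => by exact_mod_cast hdeg v
    have hc : ((insert w (G.neighborFinset w))ᶜ.card : ℝ) =
        Fintype.card V - (G.degree w + 1) := by
      rw [card_compl, Nat.cast_sub (card_le_univ _), card_insert_of_notMem hw,
        SimpleGraph.card_neighborFinset_eq_degree]
      push_cast; ring
    rw [hc] at hlow
    linarith
  have hS : 0 < ∑ v, x v := by
    obtain ⟨v, hv⟩ := Function.ne_iff.1 hx0
    exact sum_pos' (fun v _ => hx v) ⟨v, mem_univ _, lt_of_le_of_ne (hx v) (Ne.symm hv)⟩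
  have h3 : r * (r * ∑ v, x v) ≤ (D - d * ((Fintype.card V : ℝ) - 1)) * ∑ v, x v +
      ((d : ℝ) - 1) * (r * ∑ v, x v) := by
    rw [h2, h1, mul_sum, mul_sum, ← sum_add_distrib]
    refine sum_le_sum fun w _ => ?_
    have := mul_le_mul_of_nonneg_left (key w) (hx w)
    linarith
  refine le_of_mul_le_mul_right ?_ hS
  linarith

/-- A clique together with an outside vertex attached to it forces the spectral radius to exceed
that of the clique. -/
theorem card_sub_one_lt_specRad {V : Type*} [Fintype V] (G : SimpleGraph V) {C : Finset V}
    (hC : G.IsClique C) {u c : V} (hu : u ∉ C) (hc : c ∈ C) (huc : G.Adj u c) :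
    (C.card : ℝ) - 1 < specRad G := by
  classical
  have : Nonempty V := ⟨u⟩
  obtain ⟨-, -, -, -, hray⟩ := exists_perron_vector G
  have hk : (1 : ℝ) ≤ C.card := by exact_mod_cast card_pos.2 ⟨c, hc⟩
  set k := (C.card : ℝ)
  have hk0 : 0 < k := zero_lt_one.trans_le hk
  set ε : ℝ := 1 / k
  have hε : 0 < ε := by positivity
  let y : V → ℝ := fun i => if i ∈ C then 1 else if i = u then ε else 0
  have hyC : ∀ i ∈ C, y i = 1 := fun i hi => by simp [y, hi]
  have hyu : y u = ε := by simp [y, hu]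
  have hy0 : ∀ i, 0 ≤ y i := fun i => by
    simp only [y]; split_ifs <;> simp [hε.le]
  have hysum : ∀ f : V → ℝ, ∑ i, y i * f i = ∑ i ∈ C, f i + ε * f u := by
    intro f
    rw [← sum_subset (subset_univ (insert u C)), sum_insert hu, hyu, add_comm]
    · congr 1
      exact sum_congr rfl fun i hi => by rw [hyC i hi, one_mul]
    · intro i _ hi
      simp only [mem_insert, not_or] at hi
      simp [y, hi.1, hi.2]
  have hAy : ∀ i (s : Finset V), (∀ j ∈ s, G.Adj i j) →
      ∑ j ∈ s, y j ≤ (G.adjMatrix ℝ *ᵥ y) i := by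
    intro i s hs
    rw [SimpleGraph.adjMatrix_mulVec_apply]
    exact sum_le_sum_of_subset_of_nonneg (fun j hj => by simpa using hs j hj)
      fun j _ _ => hy0 j
  have herase : ∀ i ∈ C, ∑ j ∈ C.erase i, y j = k - 1 := by
    intro i hi
    rw [sum_congr rfl fun j hj => hyC j (mem_of_mem_erase hj)]
    simp [card_erase_of_mem hi, Nat.cast_sub (card_pos.2 ⟨c, hc⟩), k]
  have hadj : ∀ i ∈ C, ∀ j ∈ C.erase i, G.Adj i j := fun i hi j hj =>
    hC hi (mem_of_mem_erase hj) (ne_of_mem_erase hj).symm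
  have h1 : ∀ i ∈ C, (k - 1) + (if i = c then ε else 0) ≤ (G.adjMatrix ℝ *ᵥ y) i := by
    intro i hi
    split_ifs with hic
    · subst hic
      have hu' : u ∉ C.erase i := fun h => hu (mem_of_mem_erase h)
      have := hAy i (insert u (C.erase i)) (fun j hj => by
        rcases mem_insert.1 hj with rfl | hj
        · exact huc.symm
        · exact hadj i hi j hj)
      rw [sum_insert hu', herase i hi, hyu] at this
      linarith
    · have := hAy i (C.erase i) (hadj i hi)
      rw [herase i hi] at this
      linarith
  have h2 : 1 ≤ (G.adjMatrix ℝ *ᵥ y) u := by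
    have := hAy u {c} (fun j hj => by rwa [mem_singleton.1 hj])
    simpa [hyC c hc] using this
  have h3 : k * (k - 1) + 2 * ε ≤ y ⬝ᵥ G.adjMatrix ℝ *ᵥ y := by
    rw [dotProduct, hysum]
    have := sum_le_sum h1
    rw [sum_add_distrib, sum_const, nsmul_eq_mul, sum_ite_eq' C c, if_pos hc] at this
    nlinarith
  have h4 : y ⬝ᵥ y = k + ε * ε := by
    rw [dotProduct, hysum, hyu, sum_congr rfl hyC]
    simp [k]
  have h5 := h3.trans (hray y)
  rw [h4] at h5
  by_contra! hcon
  have h6 : specRad G * (k + ε * ε) ≤ (k - 1) * (k + ε * ε) :=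
    mul_le_mul_of_nonneg_right hcon (add_nonneg hk0.le (mul_self_nonneg _))
  have h7 : k * ε = 1 := mul_one_div_cancel hk0.ne'
  nlinarith

end Spectral

section Hamiltonian

variable {V : Type*}

/-- The list `l` enumerates the vertices of `G` along a closed spanning cycle. -/
def IsHamiltonianList (G : SimpleGraph V) (l : List V) : Prop :=
  l.Nodup ∧ (∀ v, v ∈ l) ∧ l.IsChain G.Adj ∧ ∀ a ∈ l.getLast?, ∀ b ∈ l.head?, G.Adj a b

theorem IsHamiltonianList.rotate {G : SimpleGraph V} {a b : List V} (ha : a ≠ []) (hb : b ≠ [])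
    (h : IsHamiltonianList G (a ++ b)) : IsHamiltonianList G (b ++ a) := by
  obtain ⟨hn, hm, hc, hl⟩ := h
  rw [List.isChain_append] at hc
  refine ⟨List.nodup_append_comm.1 hn, fun v => ?_, ?_, ?_⟩
  · have := hm v
    simp only [List.mem_append] at this ⊢
    exact this.symm
  · rw [List.isChain_append]
    refine ⟨hc.2.1, hc.1, fun x hx y hy => hl x ?_ y ?_⟩
    · rwa [List.getLast?_append_of_ne_nil _ hb]
    · rwa [List.head?_append_of_ne_nil _ ha]
  · rw [List.getLast?_append_of_ne_nil _ ha, List.head?_append_of_ne_nil _ hb]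
    exact hc.2.2

theorem IsHamiltonianList.isHamiltonian [Fintype V] [DecidableEq V] {G : SimpleGraph V}
    {l : List V} (hl : IsHamiltonianList G l) (hV : 3 ≤ Fintype.card V) : G.IsHamiltonian := by
  obtain ⟨hn, hm, hc, hadj⟩ := hl
  have hlen : l.length = Fintype.card V := by
    rw [← List.toFinset_card_of_nodup hn, ← Finset.card_univ]
    congr 1
    ext v; simp [hm v]
  have hne : l ≠ [] := by rintro rfl; simp at hlen; omega
  intro _
  have hclose : G.Adj (l.getLast hne) (l.head hne) :=
    hadj _ (by rw [List.getLast?_eq_getLast_of_ne_nil hne]; rfl) _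
      (by rw [List.head?_eq_some_head hne]; rfl)
  let p := SimpleGraph.Walk.ofSupport l hne hc
  have hsupp : p.support = l := SimpleGraph.Walk.support_ofSupport hne hc
  have hplen : p.length + 1 = Fintype.card V := by
    rw [← SimpleGraph.Walk.length_support, hsupp, hlen]
  have hpath : p.IsPath := SimpleGraph.Walk.IsPath.mk' (by rw [hsupp]; exact hn)
  refine ⟨_, SimpleGraph.Walk.cons hclose p, ?_⟩
  rw [SimpleGraph.Walk.isHamiltonianCycle_iff_isCycle_and_length_eq]
  refine ⟨?_, by simpa using hplen⟩
  rw [SimpleGraph.Walk.cons_isCycle_iff]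
  refine ⟨hpath, fun h => ?_⟩
  have := hpath.length_eq_one_of_mem_edges (Sym2.eq_swap ▸ h)
  omega

/-- A path that starts and ends in a clique and contains all vertices outside the clique
extends to a Hamiltonian cycle. -/
theorem exists_isHamiltonianList_of_clique [Fintype V] {G : SimpleGraph V} {C : Set V}
    (hC : G.IsClique C) (p : List V) (hp : p ≠ []) (hn : p.Nodup)
    (hchain : p.IsChain G.Adj)
    (hcov : ∀ v, v ∉ C → v ∈ p) (hhead : ∀ a ∈ p.head?, a ∈ C) (hlast : ∀ a ∈ p.getLast?, a ∈ C)
    (hlen : p.length < Fintype.card V) : ∃ l, IsHamiltonianList G l := by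
  classical
  let r := (Finset.univ \ p.toFinset).toList
  have hr : ∀ v, v ∈ r ↔ v ∉ p := by simp [r]
  have hrC : ∀ v ∈ r, v ∈ C := fun v hv => by
    by_contra h
    exact (hr v).1 hv (hcov v h)
  have hrn : r.Nodup := Finset.nodup_toList _
  have hr0 : r ≠ [] := by
    intro h0
    have : ∀ v, v ∈ p := fun v => by
      by_contra hv
      simpa [h0] using (hr v).2 hv
    have h1 : p.toFinset = Finset.univ := by ext v; simp [this v]
    have h2 := List.toFinset_card_le p
    rw [h1, Finset.card_univ] at h2
    omega
  have hne : ∀ a ∈ p, ∀ b ∈ r, a ≠ b := fun a ha b hb h => (hr b).1 hb (h ▸ ha)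
  refine ⟨p ++ r, ?_, fun v => ?_, ?_, ?_⟩
  · exact List.nodup_append.2 ⟨hn, hrn, hne⟩
  · rw [List.mem_append, hr]; tauto
  · rw [List.isChain_append]
    refine ⟨hchain, List.Pairwise.isChain ?_, fun x hx y hy => ?_⟩
    · exact hrn.imp_of_mem fun ha hb hab => hC (hrC _ ha) (hrC _ hb) hab
    · exact hC (hlast x hx) (hrC y (List.mem_of_mem_head? hy))
        (hne x (List.mem_of_getLast? hx) y (List.mem_of_mem_head? hy))
  · rw [List.getLast?_append_of_ne_nil _ hr0, List.head?_append_of_ne_nil _ hp]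
    intro a ha b hb
    exact hC (hrC a (List.mem_of_getLast? ha)) (hhead b hb)
      (hne b (List.mem_of_mem_head? hb) a (List.mem_of_getLast? ha)).symm

/-- Adding an edge between the endpoints of the split `a ++ b` of a path lets one reroute it. -/
theorem isHamiltonianList_append_reverse {G : SimpleGraph V} {a b : List V}
    (hn : (a ++ b).Nodup) (hm : ∀ v, v ∈ a ++ b) (hc : (a ++ b).IsChain G.Adj)
    (h1 : ∀ x ∈ a.getLast?, ∀ y ∈ b.getLast?, G.Adj x y)
    (h2 : ∀ x ∈ a.head?, ∀ y ∈ b.head?, G.Adj x y) (ha : a ≠ []) (hb : b ≠ []) :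
    IsHamiltonianList G (a ++ b.reverse) := by
  have hperm : (a ++ b.reverse).Perm (a ++ b) := (List.reverse_perm b).append_left a
  rw [List.isChain_append] at hc
  refine ⟨hperm.nodup_iff.2 hn, fun v => hperm.mem_iff.2 (hm v), ?_, ?_⟩
  · rw [List.isChain_append]
    refine ⟨hc.1, ?_, ?_⟩
    · rw [List.isChain_reverse]
      exact hc.2.1.imp fun x y h => h.symm
    · simpa using h1
  · rw [List.getLast?_append_of_ne_nil _ (by simpa using hb), List.head?_append_of_ne_nil _ ha,
      List.getLast?_reverse]
    exact fun x hx y hy => (h2 y hy x hx).symm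

theorem exists_hamiltonianPath_of_add_edge [Fintype V] {H : SimpleGraph V}
    (hV : 3 ≤ Fintype.card V) (hH : ¬ ∃ l, IsHamiltonianList H l) {u v : V}
    (huv : ∃ l, IsHamiltonianList (H ⊔ SimpleGraph.edge u v) l) :
    ∃ t : List V, (u :: t).Nodup ∧ (∀ w, w ∈ u :: t) ∧ (u :: t).IsChain H.Adj ∧
      t.getLast? = some v := by
  classical
  have hadj : ∀ x y, (H ⊔ SimpleGraph.edge u v).Adj x y →
      H.Adj x y ∨ (x = u ∧ y = v) ∨ (x = v ∧ y = u) := by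
    intro x y h
    rw [SimpleGraph.sup_adj, SimpleGraph.edge_adj] at h
    tauto
  obtain ⟨l, hl⟩ := huv
  obtain ⟨t, ht⟩ : ∃ t, IsHamiltonianList (H ⊔ SimpleGraph.edge u v) (u :: t) := by
    obtain ⟨a, b, rfl⟩ := List.append_of_mem (hl.2.1 u)
    by_cases ha : a = []
    · exact ⟨b, by simpa [ha] using hl⟩
    · exact ⟨b ++ a, hl.rotate ha (by simp)⟩
  obtain ⟨hn, hm, hc, hlast⟩ := ht
  have hlen : 3 ≤ (u :: t).length := by
    have : (u :: t).toFinset = Finset.univ := by ext w; simpa using hm w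
    have h2 := List.toFinset_card_le (u :: t)
    rw [this, Finset.card_univ] at h2
    omega
  have hut : u ∉ t := (List.nodup_cons.1 hn).1
  have htn : t.Nodup := (List.nodup_cons.1 hn).2
  have htc : t.IsChain H.Adj := by
    refine hc.of_cons.imp_of_mem_imp fun x y hx hy h => ?_
    rcases hadj x y h with h | ⟨rfl, -⟩ | ⟨-, rfl⟩
    · exact h
    · exact absurd hx hut
    · exact absurd hy hut
  obtain ⟨x, s, rfl⟩ : ∃ x s, t = x :: s := by
    cases t with
    | nil => simp at hlen
    | cons x s => exact ⟨x, s, rfl⟩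
  obtain ⟨s', y, rfl⟩ : ∃ s' y, s = s' ++ [y] := by
    rcases List.eq_nil_or_concat s with rfl | ⟨s', y, h⟩
    · simp at hlen
    · exact ⟨s', y, by simpa using h⟩
  have hxy : x ≠ y := by
    rintro rfl
    simp at htn
  have hux := hadj u x hc.rel
  have hyu := hadj y u (hlast y (by
    rw [← List.cons_append, ← List.cons_append, List.getLast?_append_of_ne_nil _ (by simp)]
    simp) u (by simp))
  have hxu : x ≠ u := fun h => hut (by simp [h])
  have hyu' : y ≠ u := fun h => hut (by simp [h])
  have hux' : H.Adj u x ∨ x = v := by tauto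
  have hyu'' : H.Adj y u ∨ y = v := by tauto
  clear hux hyu
  rcases hux' with hux | rfl
  · rcases hyu'' with hyu | rfl
    · exact absurd ⟨u :: x :: (s' ++ [y]), hn, hm, by
        rw [List.isChain_cons_cons]; exact ⟨hux, htc⟩, by
        rw [← List.cons_append, ← List.cons_append, List.getLast?_append_of_ne_nil _ (by simp)]
        simpa using hyu⟩ hH
    · refine ⟨x :: (s' ++ [y]), hn, hm, by rw [List.isChain_cons_cons]; exact ⟨hux, htc⟩, ?_⟩
      rw [← List.cons_append, List.getLast?_append_of_ne_nil _ (by simp)]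
      simp
  · have hyu : H.Adj y u := by
      rcases hyu'' with h | h
      · exact h
      · exact absurd h.symm hxy
    have hperm : (u :: (x :: (s' ++ [y])).reverse).Perm (u :: x :: (s' ++ [y])) :=
      (List.reverse_perm _).cons u
    refine ⟨(x :: (s' ++ [y])).reverse, hperm.nodup_iff.2 hn, fun w => hperm.mem_iff.2 (hm w),
      ?_, by rw [List.getLast?_reverse]; rfl⟩
    have hrc : (x :: (s' ++ [y])).reverse.IsChain H.Adj := by
      rw [List.isChain_reverse]
      exact htc.imp fun a b h => h.symm
    rw [List.isChain_cons]
    refine ⟨fun z hz => ?_, hrc⟩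
    rw [List.head?_reverse, ← List.cons_append, List.getLast?_append_of_ne_nil _ (by simp)] at hz
    obtain rfl : y = z := by simpa using hz
    exact hyu.symm

/-- In a non-Hamiltonian graph that becomes Hamiltonian when joining `u` and `v`,
the degrees of `u` and `v` sum to less than the number of vertices. -/
theorem degree_add_degree_lt_of_add_edge [Fintype V] {H : SimpleGraph V} [DecidableRel H.Adj]
    (hV : 3 ≤ Fintype.card V) (hH : ¬ ∃ l, IsHamiltonianList H l) {u v : V}
    (huv : ∃ l, IsHamiltonianList (H ⊔ SimpleGraph.edge u v) l) :
    H.degree u + H.degree v < Fintype.card V := by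
  classical
  obtain ⟨t, hn, hm, hc, hlast⟩ := exists_hamiltonianPath_of_add_edge hV hH huv
  have hlen : (u :: t).length = Fintype.card V := by
    have : (u :: t).toFinset = Finset.univ := by ext w; simpa using hm w
    rw [← List.toFinset_card_of_nodup hn, this, Finset.card_univ]
  have ht : t ≠ [] := by rintro rfl; simp at hlast
  let g : ℕ → V := fun i => (u :: t).getD i u
  let I := (Finset.range t.length).filter fun i => H.Adj v (g i)
  let J := (Finset.range t.length).filter fun i => H.Adj u (g (i + 1))
  have hget : ∀ w, ∃ i, i < t.length + 1 ∧ g i = w := by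
    intro w
    obtain ⟨i, hi, hiw⟩ := List.mem_iff_getElem.1 (hm w)
    exact ⟨i, by simpa using hi, by simp only [g]; rw [List.getD_eq_getElem _ _ hi, hiw]⟩
  have hglast : g t.length = v := by
    simp only [g]
    rw [List.getD_eq_getElem _ _ (by simp)]
    rw [List.getLast?_eq_some_iff] at hlast
    obtain ⟨s, rfl⟩ := hlast
    simp
  have hg0 : g 0 = u := by simp [g]
  have hI : H.degree v ≤ I.card := by
    rw [← SimpleGraph.card_neighborFinset_eq_degree]
    refine (Finset.card_le_card ?_).trans (Finset.card_image_le (f := g))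
    intro w hw
    rw [SimpleGraph.mem_neighborFinset] at hw
    obtain ⟨i, hi, rfl⟩ := hget w
    refine Finset.mem_image_of_mem g (Finset.mem_filter.2 ⟨Finset.mem_range.2 ?_, hw⟩)
    have : i ≠ t.length := by rintro rfl; rw [hglast] at hw; exact hw.ne rfl
    omega
  have hJ : H.degree u ≤ J.card := by
    rw [← SimpleGraph.card_neighborFinset_eq_degree]
    refine (Finset.card_le_card ?_).trans (Finset.card_image_le (f := fun i => g (i + 1)))
    intro w hw
    rw [SimpleGraph.mem_neighborFinset] at hw
    obtain ⟨i, hi, rfl⟩ := hget w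
    cases i with
    | zero => rw [hg0] at hw; exact absurd rfl hw.ne
    | succ i =>
      exact Finset.mem_image.2 ⟨i, Finset.mem_filter.2 ⟨Finset.mem_range.2 (by omega), hw⟩, rfl⟩
  have hdisj : Disjoint I J := by
    rw [Finset.disjoint_left]
    intro i hiI hiJ
    obtain ⟨hi, hvi⟩ := Finset.mem_filter.1 hiI
    obtain ⟨-, hui⟩ := Finset.mem_filter.1 hiJ
    rw [Finset.mem_range] at hi
    have hsplit : (u :: t).take (i + 1) ++ (u :: t).drop (i + 1) = u :: t :=
      List.take_append_drop _ _
    refine hH ⟨_, isHamiltonianList_append_reverse (a := (u :: t).take (i + 1))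
      (b := (u :: t).drop (i + 1)) (by rwa [hsplit]) (by rwa [hsplit]) (by rwa [hsplit])
      ?_ ?_ (by simp) (by simpa using hi)⟩
    · intro x hx y hy
      have hx' : x = g i := by
        rw [List.getLast?_take, List.getElem?_eq_getElem (by simp; omega)] at hx
        simp only [g]
        rw [List.getD_eq_getElem _ _ (by simp; omega)]
        simpa using hx.symm
      have hy' : y = v := by
        rw [List.getLast?_drop, if_neg (by simp; omega), List.getLast?_cons, hlast] at hy
        simpa using hy.symm
      rw [hx', hy']; exact hvi.symm
    · intro x hx y hy
      have hx' : x = u := by simpa using hx.symm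
      have hy' : y = g (i + 1) := by
        rw [List.head?_drop, List.getElem?_eq_getElem (by simpa using hi)] at hy
        simp only [g]
        rw [List.getD_eq_getElem _ _ (by simpa using hi)]
        simpa using hy.symm
      rw [hx', hy']; exact hui
  have hunion : (I ∪ J).card ≤ t.length := by
    refine (Finset.card_le_card (Finset.union_subset (Finset.filter_subset _ _)
      (Finset.filter_subset _ _))).trans_eq (Finset.card_range _)
  rw [Finset.card_union_of_disjoint hdisj] at hunion
  simp only [List.length_cons] at hlen
  omega

end Hamiltonian

section Toughness

open Finset

variable {V : Type*}

/-- Deleting `S` from `G` leaves at most `|S|` classes in any nontrivial partition of the remaining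
vertices (given by the colouring `c`, with `T` a set of colours in use) without crossing edges. -/
def IsOneTough (G : SimpleGraph V) : Prop :=
  ∀ (S T : Finset V) (c : V → V), 1 < T.card → (∀ j ∈ T, ∃ v, v ∉ S ∧ c v = j) →
    (∀ a b, a ∉ S → b ∉ S → G.Adj a b → c a = c b) → T.card ≤ S.card

theorem IsOneTough.mono {G H : SimpleGraph V} (hG : IsOneTough G) (h : G ≤ H) : IsOneTough H :=
  fun S T c hT hc hadj => hG S T c hT hc fun a b ha hb hab => hadj a b ha hb (h hab)

theorem isOneTough_of_one_le_toughness [Finite V] {G : SimpleGraph V} (h : 1 ≤ toughness G) :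
    IsOneTough G := by
  classical
  intro S T c hT hc hadj
  let f : (SimpleGraph.induce ((S : Set V)ᶜ) G).ConnectedComponent → V :=
    SimpleGraph.ConnectedComponent.lift (fun v => c v) (by
      intro v w p _
      induction p with
      | nil => rfl
      | @cons a b _ hab _ ih =>
        rename_i hp
        exact (hadj _ _ (fun h => a.2 (mem_coe.2 h)) (fun h => b.2 (mem_coe.2 h)) hab).trans
          (ih hp.of_cons))
  have hrange : (T : Set V) ⊆ Set.range f := by
    intro j hj
    obtain ⟨v, hv, rfl⟩ := hc j hj
    exact ⟨SimpleGraph.connectedComponentMk _ ⟨v, by simpa using hv⟩, rfl⟩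
  have hcomp : T.card ≤ numComp G S := by
    have h1 : T.card ≤ (Set.range f).ncard := by
      rw [← Set.ncard_coe_finset]
      exact Set.ncard_le_ncard hrange (Set.toFinite _)
    refine h1.trans ?_
    rw [← Set.image_univ]
    refine (Set.ncard_image_le (Set.toFinite _)).trans ?_
    rw [Set.ncard_univ, numComp]
  have h2 : toughness G ≤ (S.card : ℝ) / numComp G S := by
    refine csInf_le ⟨0, ?_⟩ ⟨S, hT.trans_le hcomp, by rw [Set.ncard_coe_finset]⟩
    rintro x ⟨S', -, rfl⟩
    positivity
  have h3 := h.trans h2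
  have h4 : (0 : ℝ) < numComp G S := by exact_mod_cast (by omega : 0 < numComp G S)
  rw [le_div_iff₀ h4, one_mul] at h3
  exact hcomp.trans (by exact_mod_cast h3)

/-- If all edges leaving `U` end in `S`, then the number of classes of `U` under a colouring
constant along edges is less than `|S|`. -/
theorem IsOneTough.card_image_lt [Fintype V] [DecidableEq V] {G : SimpleGraph V}
    (hG : IsOneTough G) (S U : Finset V) (c : V → V) (hdisj : Disjoint U S) (hne : U.Nonempty)
    (hcU : ∀ u ∈ U, c u ∈ U) (hc : ∀ u ∈ U, ∀ v ∈ U, G.Adj u v → c u = c v)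
    (hN : ∀ u ∈ U, ∀ w, G.Adj u w → w ∈ U ∨ w ∈ S) (hcard : U.card + S.card < Fintype.card V) :
    (U.image c).card < S.card := by
  obtain ⟨w, hw⟩ : ∃ w, w ∉ U ∪ S := by
    by_contra! hcon
    have : U ∪ S = univ := by ext; simp [hcon]
    have h1 := card_union_le U S
    rw [this, card_univ] at h1
    omega
  simp only [mem_union, not_or] at hw
  have hwI : w ∉ U.image c := by
    intro h
    obtain ⟨u, hu, rfl⟩ := mem_image.1 h
    exact hw.1 (hcU u hu)
  have := hG S (insert w (U.image c)) (fun v => if v ∈ U then c v else w) ?_ ?_ ?_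
  · rw [card_insert_of_notMem hwI] at this
    omega
  · rw [card_insert_of_notMem hwI]
    have := (hne.image c).card_pos
    omega
  · intro j hj
    rcases mem_insert.1 hj with rfl | hj
    · exact ⟨j, hw.2, by simp [hw.1]⟩
    · obtain ⟨u, hu, rfl⟩ := mem_image.1 hj
      exact ⟨u, disjoint_left.1 hdisj hu, by simp [hu]⟩
  · intro a b ha hb hab
    by_cases haU : a ∈ U <;> by_cases hbU : b ∈ U <;> simp only [haU, hbU, if_true, if_false]
    · exact hc a haU b hbU hab
    · rcases hN a haU b hab with h | h
      · exact absurd h hbU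
      · exact absurd h hb
    · rcases hN b hbU a hab.symm with h | h
      · exact absurd h haU
      · exact absurd h ha

/-- If `U` is independent and all neighbours of `U` lie in `S`, then `|U| < |S|`. -/
theorem IsOneTough.card_lt_of_isolated [Fintype V] [DecidableEq V] {G : SimpleGraph V}
    (hG : IsOneTough G) (S U : Finset V) (hdisj : Disjoint U S) (hne : U.Nonempty)
    (hN : ∀ u ∈ U, ∀ w, G.Adj u w → w ∈ S) (hcard : U.card + S.card < Fintype.card V) :
    U.card < S.card := by
  have := hG.card_image_lt S U id hdisj hne (fun u hu => hu)
    (fun u hu v hv h => absurd (hN u hu v h) (disjoint_left.1 hdisj hv))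
    (fun u hu w h => Or.inr (hN u hu w h)) hcard
  simpa using this

/-- A nonempty vertex set whose complement is large enough has at least two outer neighbours. -/
theorem IsOneTough.one_lt_card [Fintype V] [DecidableEq V] {G : SimpleGraph V}
    (hG : IsOneTough G) (S U : Finset V) (hdisj : Disjoint U S) (hne : U.Nonempty)
    (hN : ∀ u ∈ U, ∀ w, G.Adj u w → w ∈ U ∨ w ∈ S) (hcard : U.card + S.card < Fintype.card V) :
    1 < S.card := by
  obtain ⟨u₀, hu₀⟩ := id hne
  have := hG.card_image_lt S U (fun _ => u₀) hdisj hne (fun _ _ => hu₀) (fun _ _ _ _ _ => rfl) hN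
    hcard
  rwa [image_const hne, card_singleton] at this

theorem IsOneTough.two_le_degree [Fintype V] {G : SimpleGraph V} [DecidableRel G.Adj]
    (hG : IsOneTough G) (hV : 3 ≤ Fintype.card V) (v : V) : 2 ≤ G.degree v := by
  classical
  by_contra! hlt
  have := hG.card_lt_of_isolated (G.neighborFinset v) {v} (by simp) (by simp)
    (fun u hu w h => by rw [mem_singleton.1 hu] at h; simpa using h) (by simp; omega)
  simp at this
  omega

end Toughness

section Linking

variable {V : Type*} {G : SimpleGraph V} {U : Set V}

/-- `p, s, q` is a path of `G` whose interior `s` lies in `U` and whose distinct ends do not. -/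
def IsLink (G : SimpleGraph V) (U : Set V) (p : V) (s : List V) (q : V) : Prop :=
  p ∉ U ∧ q ∉ U ∧ p ≠ q ∧ s.Nodup ∧ (∀ v ∈ s, v ∈ U) ∧ (p :: (s ++ [q])).IsChain G.Adj

theorem IsLink.reverse {p q : V} {s : List V} (h : IsLink G U p s q) :
    IsLink G U q s.reverse p := by
  obtain ⟨hp, hq, hpq, hn, hU, hc⟩ := h
  refine ⟨hq, hp, hpq.symm, by simpa using hn, by simpa using hU, ?_⟩
  have : q :: (s.reverse ++ [p]) = (p :: (s ++ [q])).reverse := by simp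
  rw [this, List.isChain_reverse]
  exact hc.imp fun _ _ h => h.symm

theorem isLink_singleton {p u q : V} (hp : p ∉ U) (hq : q ∉ U) (hpq : p ≠ q) (hu : u ∈ U)
    (hup : G.Adj u p) (huq : G.Adj u q) : IsLink G U p [u] q :=
  ⟨hp, hq, hpq, by simp, by simpa using hu, by simp [hup.symm, huq]⟩

theorem isLink_pair {p u v q : V} (hp : p ∉ U) (hq : q ∉ U) (hpq : p ≠ q) (hu : u ∈ U)
    (hv : v ∈ U) (hup : G.Adj u p) (huv : G.Adj u v) (hvq : G.Adj v q) :
    IsLink G U p [u, v] q :=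
  ⟨hp, hq, hpq, by simp [huv.ne], by simp [hu, hv], by simp [hup.symm, huv, hvq]⟩

theorem isLink_triple {p u v w q : V} (hp : p ∉ U) (hq : q ∉ U) (hpq : p ≠ q) (hu : u ∈ U)
    (hv : v ∈ U) (hw : w ∈ U) (hup : G.Adj u p) (huv : G.Adj u v) (hvw : G.Adj v w)
    (huw : u ≠ w) (hwq : G.Adj w q) : IsLink G U p [u, v, w] q :=
  ⟨hp, hq, hpq, by simp [huv.ne, hvw.ne, huw], by simp [hu, hv, hw],
    by simp [hup.symm, huv, hvw, hwq]⟩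

variable [Fintype V]

theorem IsLink.exists_isHamiltonianList (hK : G.IsClique Uᶜ) {p q : V} {s : List V}
    (h : IsLink G U p s q) (hcov : ∀ v ∈ U, v ∈ s) (hlen : s.length + 2 < Fintype.card V) :
    ∃ l, IsHamiltonianList G l := by
  obtain ⟨hp, hq, hpq, hn, hU, hc⟩ := h
  refine exists_isHamiltonianList_of_clique hK (p :: (s ++ [q])) (by simp) ?_ hc ?_ ?_ ?_ ?_
  · have h1 : p ∉ s := fun h => hp (hU p h)
    have h2 : q ∉ s := fun h => hq (hU q h)
    simp [List.nodup_append, h1, hpq, hn]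
    grind
  · intro v hv
    have := hcov v (by simpa using hv)
    simp [this]
  · simpa using hp
  · simpa [List.getLast?_cons, List.getLast?_append] using hq
  · simpa using hlen

theorem IsLink.exists_isHamiltonianList_of_shared (hK : G.IsClique Uᶜ) {p q b : V}
    {s t : List V} (h : IsLink G U p s q) (h' : IsLink G U q t b) (hpb : p ≠ b)
    (hst : s.Disjoint t) (hcov : ∀ v ∈ U, v ∈ s ∨ v ∈ t)
    (hlen : s.length + t.length + 4 < Fintype.card V) : ∃ l, IsHamiltonianList G l := by
  obtain ⟨hp, hq, hpq, hn, hU, hc⟩ := h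
  obtain ⟨-, hb, hqb, hn', hU', hc'⟩ := h'
  refine exists_isHamiltonianList_of_clique hK (p :: (s ++ q :: (t ++ [b]))) (by simp) ?_ ?_ ?_ ?_
    ?_ ?_
  · have h1 : p ∉ s := fun h => hp (hU p h)
    have h2 : q ∉ s := fun h => hq (hU q h)
    have h3 : b ∉ s := fun h => hb (hU b h)
    have h4 : p ∉ t := fun h => hp (hU' p h)
    have h5 : q ∉ t := fun h => hq (hU' q h)
    have h6 : b ∉ t := fun h => hb (hU' b h)
    simp [List.nodup_append, h1, hpq, hn, h4, h5, hn', hqb, hpb]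
    grind [List.Disjoint]
  · have h1 : p :: (s ++ q :: (t ++ [b])) = (p :: s) ++ q :: (t ++ [b]) := by simp
    rw [h1]
    exact List.isChain_split.2 ⟨hc, hc'⟩
  · intro v hv
    have := hcov v (by simpa using hv)
    simp
    tauto
  · simpa using hp
  · simpa [List.getLast?_cons, List.getLast?_append] using hb
  · simp; omega

/-- Two disjoint links covering `U` extend to a spanning cycle unless they have the same ends. -/
theorem IsLink.exists_isHamiltonianList_of_two (hK : G.IsClique Uᶜ) {p q a b : V}
    {s t : List V} (h : IsLink G U p s q) (h' : IsLink G U a t b) (h1 : p = a → q ≠ b)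
    (h2 : p = b → q ≠ a) (hst : s.Disjoint t) (hcov : ∀ v ∈ U, v ∈ s ∨ v ∈ t)
    (hlen : s.length + t.length + 4 < Fintype.card V) : ∃ l, IsHamiltonianList G l := by
  have hst1 : s.reverse.Disjoint t := by simpa [List.Disjoint] using hst
  have hst2 : s.Disjoint t.reverse := by simpa [List.Disjoint] using hst
  have hst3 : s.reverse.Disjoint t.reverse := by simpa [List.Disjoint] using hst
  by_cases hqa : q = a
  · subst hqa
    exact exists_isHamiltonianList_of_shared hK h h' (fun h => h2 h rfl) hst hcov hlen
  by_cases hqb : q = b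
  · subst hqb
    exact exists_isHamiltonianList_of_shared hK h h'.reverse (fun h => h1 h rfl) hst2
      (by simpa using hcov) (by simpa using hlen)
  by_cases hpa : p = a
  · subst hpa
    exact exists_isHamiltonianList_of_shared hK h.reverse h' hqb hst1
      (by simpa using hcov) (by simpa using hlen)
  by_cases hpb : p = b
  · subst hpb
    exact exists_isHamiltonianList_of_shared hK h.reverse h'.reverse hqa hst3
      (by simpa using hcov) (by simpa using hlen)
  clear hst1 hst2 hst3 h1 h2
  obtain ⟨hp, hq, hpq, hn, hU, hc⟩ := h
  obtain ⟨ha, hb, hab, hn', hU', hc'⟩ := h'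
  refine exists_isHamiltonianList_of_clique hK ((p :: (s ++ [q])) ++ (a :: (t ++ [b]))) (by simp)
    ?_ ?_ ?_ ?_ ?_ ?_
  · have h1 : p ∉ s := fun h => hp (hU p h)
    have h2 : q ∉ s := fun h => hq (hU q h)
    have h3 : b ∉ s := fun h => hb (hU b h)
    have h3' : a ∉ s := fun h => ha (hU a h)
    have h4 : p ∉ t := fun h => hp (hU' p h)
    have h5 : q ∉ t := fun h => hq (hU' q h)
    have h6 : b ∉ t := fun h => hb (hU' b h)
    have h6' : a ∉ t := fun h => ha (hU' a h)
    simp [List.nodup_append, h1, hpq, hn, h4, h5, hn', hqb, hpb, hpa, hqa, hab, h6']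
    grind [List.Disjoint]
  · refine List.isChain_append.2 ⟨hc, hc', ?_⟩
    have : G.Adj q a := hK hq ha hqa
    simpa [List.getLast?_cons, List.getLast?_append] using this
  · intro v hv
    have := hcov v (by simpa using hv)
    simp
    tauto
  · simpa using hp
  · simpa [List.getLast?_cons, List.getLast?_append] using hb
  · simp; omega

/-- Three vertices with pairwise disjoint pairs of neighbours in a clique covering all other
vertices lie on a spanning cycle. -/
theorem exists_isHamiltonianList_of_three (hK : G.IsClique Uᶜ) {u₁ u₂ u₃ a₁ b₁ a₂ b₂ a₃ b₃ : V}
    (hU : ∀ v ∈ U, v = u₁ ∨ v = u₂ ∨ v = u₃)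
    (hu : [u₁, u₂, u₃].Nodup) (hl : [a₁, b₁, a₂, b₂, a₃, b₃].Nodup)
    (hu₁ : ∀ v ∈ [u₁, u₂, u₃], v ∈ U) (hl₁ : ∀ v ∈ [a₁, b₁, a₂, b₂, a₃, b₃], v ∉ U)
    (h₁ : G.Adj u₁ a₁) (h₁' : G.Adj u₁ b₁) (h₂ : G.Adj u₂ a₂) (h₂' : G.Adj u₂ b₂)
    (h₃ : G.Adj u₃ a₃) (h₃' : G.Adj u₃ b₃) (hlen : 9 < Fintype.card V) :
    ∃ l, IsHamiltonianList G l := by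
  refine exists_isHamiltonianList_of_clique hK [a₁, u₁, b₁, a₂, u₂, b₂, a₃, u₃, b₃] (by simp)
    ?_ ?_ ?_ ?_ ?_ ?_
  · have : (([a₁, b₁, a₂, b₂, a₃, b₃] ++ [u₁, u₂, u₃]).Nodup) := by
      rw [List.nodup_append]
      refine ⟨hl, hu, fun a ha b hb hab => hl₁ a ha (hab ▸ hu₁ b hb)⟩
    refine List.Perm.nodup_iff ?_ |>.1 this
    classical
    rw [List.perm_iff_count]
    intro v
    simp [List.count_cons]
    omega
  · have e1 : G.Adj b₁ a₂ := hK (hl₁ _ (by simp)) (hl₁ _ (by simp)) (by grind)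
    have e2 : G.Adj b₂ a₃ := hK (hl₁ _ (by simp)) (hl₁ _ (by simp)) (by grind)
    simp [h₁.symm, h₁', h₂.symm, h₂', h₃.symm, h₃', e1, e2]
  · intro v hv
    have := hU v (by simpa using hv)
    simp
    tauto
  · simpa using hl₁ _ (by simp)
  · simpa using hl₁ b₃ (by simp)
  · simpa using hlen

end Linking

section Structure

open Finset

variable {V : Type*} [Fintype V] {G : SimpleGraph V}

theorem IsOneTough.exists_adj_of_card_le [DecidableEq V] (hG : IsOneTough G) (S U : Finset V)
    (hdisj : Disjoint U S) (hne : U.Nonempty) (hS : S.card ≤ 1)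
    (hcard : U.card + S.card < Fintype.card V) : ∃ u ∈ U, ∃ w, G.Adj u w ∧ w ∉ U ∧ w ∉ S := by
  by_contra! hcon
  have := hG.one_lt_card S U hdisj hne (fun u hu w h => by
    have := hcon u hu w h
    tauto) hcard
  omega

theorem IsOneTough.exists_adj_of_isolated [DecidableEq V] (hG : IsOneTough G) (S U : Finset V)
    (hdisj : Disjoint U S) (hne : U.Nonempty) (hS : S.card ≤ U.card)
    (hcard : U.card + S.card < Fintype.card V) : ∃ u ∈ U, ∃ w, G.Adj u w ∧ w ∉ S := by
  by_contra! hcon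
  have := hG.card_lt_of_isolated S U hdisj hne hcon hcard
  omega

/-- Every vertex has a neighbour avoiding a given vertex. -/
theorem IsOneTough.exists_adj_ne (hG : IsOneTough G) (hV : 3 ≤ Fintype.card V) (u a : V) :
    ∃ w, G.Adj u w ∧ w ≠ a := by
  classical
  by_cases h : u = a
  · obtain ⟨u', hu', w, hw⟩ := hG.exists_adj_of_card_le ∅ {u} (by simp) (by simp) (by simp)
      (by simp; omega)
    grind
  · obtain ⟨u', hu', w, hw⟩ := hG.exists_adj_of_card_le {a} {u} (by simpa using h) (by simp)
      (by simp) (by simp; omega)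
    grind

/-- Every vertex has two distinct neighbours. -/
theorem IsOneTough.exists_two_adj (hG : IsOneTough G) (hV : 3 ≤ Fintype.card V) (u : V) :
    ∃ a b, G.Adj u a ∧ G.Adj u b ∧ a ≠ b := by
  obtain ⟨a, ha, -⟩ := hG.exists_adj_ne hV u u
  obtain ⟨b, hb, hba⟩ := hG.exists_adj_ne hV u a
  exact ⟨a, b, ha, hb, hba.symm⟩

/-- Two vertices have distinct neighbours outside the pair they form. -/
theorem IsOneTough.exists_adj_pair (hG : IsOneTough G) (hV : 4 ≤ Fintype.card V) {u₁ u₂ : V}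
    (h12 : u₁ ≠ u₂) :
    ∃ p q, G.Adj u₁ p ∧ G.Adj u₂ q ∧ p ≠ u₂ ∧ q ≠ u₁ ∧ p ≠ q := by
  classical
  obtain ⟨p, hp, hp2⟩ := hG.exists_adj_ne (by omega) u₁ u₂
  obtain ⟨q, hq, hq1⟩ := hG.exists_adj_ne (by omega) u₂ u₁
  by_cases hpq : p = q
  · subst hpq
    obtain ⟨u, hu, w, hw, hwU, hwp⟩ := hG.exists_adj_of_card_le {p} {u₁, u₂}
      (by simp [hp2, hq1]) (by simp) (by simp) (by rw [card_pair h12]; simp; omega)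
    simp only [mem_insert, mem_singleton, not_or] at hu hwU hwp
    rcases hu with rfl | rfl
    · exact ⟨w, p, hw, hq, hwU.2, hq1, hwp⟩
    · exact ⟨p, w, hp, hw, hp2, hwU.1, Ne.symm hwp⟩
  · exact ⟨p, q, hp, hq, hp2, hq1, hpq⟩

theorem exists_isHamiltonianList_of_clique_compl_pair (hG : IsOneTough G)
    (hV : 7 ≤ Fintype.card V) {U : Set V} {u₁ u₂ : V} (h12 : u₁ ≠ u₂)
    (hU : ∀ v, v ∈ U ↔ v = u₁ ∨ v = u₂) (hK : G.IsClique Uᶜ) : ∃ l, IsHamiltonianList G l := by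
  classical
  have hu₁ : u₁ ∈ U := by simp [hU]
  have hu₂ : u₂ ∈ U := by simp [hU]
  have hout : ∀ v, v ≠ u₁ → v ≠ u₂ → v ∉ U := by simp +contextual [hU]
  by_cases hadj : G.Adj u₁ u₂
  · obtain ⟨p, q, hp, hq, hp2, hq1, hpq⟩ := hG.exists_adj_pair (by omega) h12
    exact (isLink_pair (hout p hp.ne' hp2) (hout q hq1 hq.ne') hpq hu₁ hu₂ hp hadj
      hq).exists_isHamiltonianList hK (by simp [hU]) (by simp; omega)
  · have out1 : ∀ v, G.Adj u₁ v → v ∉ U := fun v hv =>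
      hout v hv.ne' (by rintro rfl; exact hadj hv)
    have out2 : ∀ v, G.Adj u₂ v → v ∉ U := fun v hv =>
      hout v (by rintro rfl; exact hadj hv.symm) hv.ne'
    have key : ∀ p q a b, G.Adj u₁ p → G.Adj u₁ q → G.Adj u₂ a → G.Adj u₂ b → p ≠ q → a ≠ b →
        (p = a → q ≠ b) → (p = b → q ≠ a) → ∃ l, IsHamiltonianList G l :=
      fun p q a b hp hq ha hb hpq hab h1 h2 =>
        (isLink_singleton (out1 p hp) (out1 q hq) hpq hu₁ hp hq).exists_isHamiltonianList_of_two hK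
          (isLink_singleton (out2 a ha) (out2 b hb) hab hu₂ ha hb) h1 h2 (by simpa using h12.symm)
          (by simp [hU]) (by simp; omega)
    obtain ⟨p, q, hp, hq, hpq⟩ := hG.exists_two_adj (by omega) u₁
    obtain ⟨a, b, ha, hb, hab⟩ := hG.exists_two_adj (by omega) u₂
    obtain ⟨u, hu, w, hw, hwpq⟩ := hG.exists_adj_of_isolated {p, q} {u₁, u₂}
      (by have := out1 p hp; have := out1 q hq
          simp only [disjoint_insert_left, disjoint_singleton_left, mem_insert, mem_singleton]
          grind) (by simp) (by rw [card_pair hpq, card_pair h12])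
      (by rw [card_pair hpq, card_pair h12]; omega)
    simp only [mem_insert, mem_singleton, not_or] at hu hwpq
    by_contra hcon
    have h3 : (p = a ∧ q = b) ∨ (p = b ∧ q = a) := by
      by_contra h
      exact hcon (key p q a b hp hq ha hb hpq hab (by tauto) (by tauto))
    rcases hu with rfl | rfl
    · exact hcon (key w q a b hw hq ha hb hwpq.2 hab (by grind) (by grind))
    · exact hcon (key p q w b hp hq hw hb hpq (by grind) (by grind) (by grind))

variable {U : Set V} {u₁ u₂ u₃ : V}

theorem exists_isHamiltonianList_of_one_edge (hG : IsOneTough G) (hV : 10 ≤ Fintype.card V)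
    (hU : ∀ v, v ∈ U ↔ v = u₁ ∨ v = u₂ ∨ v = u₃) (hK : G.IsClique Uᶜ)
    (h13 : u₁ ≠ u₃) (h23 : u₂ ≠ u₃) (a12 : G.Adj u₁ u₂) (a13 : ¬ G.Adj u₁ u₃)
    (a23 : ¬ G.Adj u₂ u₃) : ∃ l, IsHamiltonianList G l := by
  classical
  have h12 := a12.ne
  have hu₁ : u₁ ∈ U := by simp [hU]
  have hu₂ : u₂ ∈ U := by simp [hU]
  have hu₃ : u₃ ∈ U := by simp [hU]
  have hout : ∀ v, v ≠ u₁ → v ≠ u₂ → v ≠ u₃ → v ∉ U := by simp +contextual [hU]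
  have out1 : ∀ v, G.Adj u₁ v → v ≠ u₂ → v ∉ U := fun v hv h =>
    hout v hv.ne' h (by rintro rfl; exact a13 hv)
  have out2 : ∀ v, G.Adj u₂ v → v ≠ u₁ → v ∉ U := fun v hv h =>
    hout v h hv.ne' (by rintro rfl; exact a23 hv)
  have out3 : ∀ v, G.Adj u₃ v → v ∉ U := fun v hv =>
    hout v (by rintro rfl; exact a13 hv.symm) (by rintro rfl; exact a23 hv.symm) hv.ne'
  have key : ∀ p q a b, G.Adj u₁ p → p ≠ u₂ → G.Adj u₂ q → q ≠ u₁ → G.Adj u₃ a → G.Adj u₃ b →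
      p ≠ q → a ≠ b → (p = a → q ≠ b) → (p = b → q ≠ a) → ∃ l, IsHamiltonianList G l :=
    fun p q a b hp hp2 hq hq1 ha hb hpq hab h1 h2 =>
      (isLink_pair (out1 p hp hp2) (out2 q hq hq1) hpq hu₁ hu₂ hp a12
        hq).exists_isHamiltonianList_of_two hK
        (isLink_singleton (out3 a ha) (out3 b hb) hab hu₃ ha hb) h1 h2
        (by simp [h13.symm, h23.symm]) (by simp [hU, or_assoc]) (by simp; omega)
  obtain ⟨p, q, hp, hq, hp2, hq1, hpq⟩ := hG.exists_adj_pair (by omega) h12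
  obtain ⟨a, b, ha, hb, hab⟩ := hG.exists_two_adj (by omega) u₃
  by_contra hcon
  have h3 : (p = a ∧ q = b) ∨ (p = b ∧ q = a) := by
    by_contra h
    exact hcon (key p q a b hp hp2 hq hq1 ha hb hpq hab (by tauto) (by tauto))
  have hp3 : p ≠ u₃ := by rintro rfl; exact a13 hp
  have hq3 : q ≠ u₃ := by rintro rfl; exact a23 hq
  obtain ⟨u, hu, w, hw, hwU, hwpq⟩ : ∃ u ∈ ({u₁, u₂, u₃} : Finset V), ∃ w, G.Adj u w ∧
      w ∉ ({u₁, u₂, u₃} : Finset V) ∧ w ∉ ({p, q} : Finset V) := by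
    by_contra! h
    have := hG.card_image_lt {p, q} {u₁, u₂, u₃} (fun v => if v = u₂ then u₁ else v)
      (by simp [hp.ne', hp2, hp3, hq.ne', hq1, hq3]) (by simp) (by simp [h12, h23.symm])
      (by simp [h12, h23.symm, a12, a13, a23, G.adj_comm u₃])
      (fun u hu w hw => by have := h u hu w hw; tauto)
      (by rw [card_pair hpq, card_eq_three.2 ⟨u₁, u₂, u₃, h12, h13, h23, rfl⟩]; omega)
    rw [card_pair hpq] at this
    simp [image_insert, h12, h23.symm, card_pair h13] at this
  simp only [mem_insert, mem_singleton, not_or] at hu hwU hwpq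
  rcases hu with rfl | rfl | rfl
  · exact hcon (key w q a b hw hwU.2.1 hq hq1 ha hb hwpq.2 hab (by grind) (by grind))
  · exact hcon (key p w a b hp hp2 hw hwU.1 ha hb (Ne.symm hwpq.1) hab (by grind) (by grind))
  · exact hcon (key p q w b hp hp2 hq hq1 hw hb hpq (by grind) (by grind) (by grind))

theorem exists_isHamiltonianList_of_two_edges (hG : IsOneTough G) (hV : 10 ≤ Fintype.card V)
    (hU : ∀ v, v ∈ U ↔ v = u₁ ∨ v = u₂ ∨ v = u₃) (hK : G.IsClique Uᶜ)
    (h13 : u₁ ≠ u₃) (a12 : G.Adj u₁ u₂) (a23 : G.Adj u₂ u₃) (a13 : ¬ G.Adj u₁ u₃) :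
    ∃ l, IsHamiltonianList G l := by
  classical
  have hu₁ : u₁ ∈ U := by simp [hU]
  have hu₂ : u₂ ∈ U := by simp [hU]
  have hu₃ : u₃ ∈ U := by simp [hU]
  have hout : ∀ v, v ≠ u₁ → v ≠ u₂ → v ≠ u₃ → v ∉ U := by simp +contextual [hU]
  have out1 : ∀ v, G.Adj u₁ v → v ≠ u₂ → v ∉ U := fun v hv h =>
    hout v hv.ne' h (by rintro rfl; exact a13 hv)
  have out3 : ∀ v, G.Adj u₃ v → v ≠ u₂ → v ∉ U := fun v hv h =>
    hout v (by rintro rfl; exact a13 hv.symm) h hv.ne'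
  have key : ∀ p q, G.Adj u₁ p → p ≠ u₂ → G.Adj u₃ q → q ≠ u₂ → p ≠ q →
      ∃ l, IsHamiltonianList G l := fun p q hp hp2 hq hq2 hpq =>
    (isLink_triple (out1 p hp hp2) (out3 q hq hq2) hpq hu₁ hu₂ hu₃ hp a12 a23 h13
      hq).exists_isHamiltonianList hK (by simp [hU]) (by simp; omega)
  obtain ⟨p, hp, hp2⟩ := hG.exists_adj_ne (by omega) u₁ u₂
  obtain ⟨q, hq, hq2⟩ := hG.exists_adj_ne (by omega) u₃ u₂
  by_cases hpq : p = q
  · subst hpq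
    obtain ⟨u, hu, w, hw, hwS⟩ := hG.exists_adj_of_isolated {u₂, p} {u₁, u₃}
      (by simp [hp.ne', a12.ne', a23.ne, hq.ne']) (by simp)
      (by rw [card_pair hp2.symm, card_pair h13]) (by rw [card_pair hp2.symm, card_pair h13]; omega)
    simp only [mem_insert, mem_singleton, not_or] at hu hwS
    rcases hu with rfl | rfl
    · exact key w p hw hwS.1 hq hq2 hwS.2
    · exact key p w hp hp2 hw hwS.1 (Ne.symm hwS.2)
  · exact key p q hp hp2 hq hq2 hpq

theorem exists_isHamiltonianList_of_triangle (hG : IsOneTough G) (hV : 10 ≤ Fintype.card V)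
    (hU : ∀ v, v ∈ U ↔ v = u₁ ∨ v = u₂ ∨ v = u₃) (hK : G.IsClique Uᶜ)
    (a12 : G.Adj u₁ u₂) (a23 : G.Adj u₂ u₃) (a13 : G.Adj u₁ u₃) :
    ∃ l, IsHamiltonianList G l := by
  classical
  have key : ∀ x y z p q, (∀ v, v ∈ U ↔ v = x ∨ v = y ∨ v = z) → x ≠ z → G.Adj x y → G.Adj y z →
      G.Adj x p → p ∉ U → G.Adj z q → q ∉ U → p ≠ q → ∃ l, IsHamiltonianList G l :=
    fun x y z p q hU hxz hxy hyz hp hpU hq hqU hpq =>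
      (isLink_triple hpU hqU hpq (by simp [hU]) (by simp [hU]) (by simp [hU]) hp hxy hyz hxz
        hq).exists_isHamiltonianList hK (by simp [hU]) (by simp; omega)
  have key' : ∀ x z p q, x ∈ U → z ∈ U → x ≠ z → G.Adj x p → p ∉ U → G.Adj z q → q ∉ U → p ≠ q →
      ∃ l, IsHamiltonianList G l := by
    intro x z p q hx hz hxz hp hpU hq hqU hpq
    rw [hU] at hx hz
    rcases hx with rfl | rfl | rfl <;> rcases hz with rfl | rfl | rfl
    · exact absurd rfl hxz
    · exact key _ _ _ p q (fun v => by rw [hU]; tauto) hxz a13 a23.symm hp hpU hq hqU hpq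
    · exact key _ _ _ p q (fun v => by rw [hU]) hxz a12 a23 hp hpU hq hqU hpq
    · exact key _ _ _ p q (fun v => by rw [hU]; tauto) hxz a23 a13.symm hp hpU hq hqU hpq
    · exact absurd rfl hxz
    · exact key _ _ _ p q (fun v => by rw [hU]; tauto) hxz a12.symm a13 hp hpU hq hqU hpq
    · exact key _ _ _ p q (fun v => by rw [hU]; tauto) hxz a23.symm a12.symm hp hpU hq hqU hpq
    · exact key _ _ _ p q (fun v => by rw [hU]; tauto) hxz a13.symm a12 hp hpU hq hqU hpq
    · exact absurd rfl hxz
  have hout : ∀ v, v ∉ U ↔ v ∉ ({u₁, u₂, u₃} : Finset V) := by simp [hU]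
  have hin : ∀ v, v ∈ U ↔ v ∈ ({u₁, u₂, u₃} : Finset V) := by simp [hU]
  have hcard : #{u₁, u₂, u₃} = 3 :=
    card_eq_three.2 ⟨u₁, u₂, u₃, a12.ne, a13.ne, a23.ne, rfl⟩
  obtain ⟨x, hx, p, hp, hpU, -⟩ := hG.exists_adj_of_card_le ∅ {u₁, u₂, u₃} (by simp) (by simp)
    (by simp) (by rw [hcard]; simp; omega)
  obtain ⟨z, hz', q, hq, hqU, hqx⟩ := hG.exists_adj_of_card_le {x}
    (({u₁, u₂, u₃} : Finset V).erase x) (by simp)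
    (by rw [← card_pos, card_erase_of_mem hx, hcard]; simp) (by simp)
    (by rw [card_erase_of_mem hx, hcard]; simp; omega)
  have hqx' : q ≠ x := by simpa using hqx
  replace hqU : q ∉ U := by
    rw [hout]; intro h; exact hqU (mem_erase.2 ⟨hqx', h⟩)
  obtain ⟨hzx, hz⟩ := mem_erase.1 hz'
  rw [← hout] at hpU
  rw [← hin] at hx hz
  by_cases hpq : p = q
  · subst hpq
    obtain ⟨y, hy, r, hr, hrU, hrp⟩ := hG.exists_adj_of_card_le {p} {u₁, u₂, u₃}
      (by rw [disjoint_singleton_right]; exact (hout p).1 hpU) (by simp)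
      (by simp) (by rw [hcard]; simp; omega)
    rw [← hout] at hrU
    rw [← hin] at hy
    have hrp' : r ≠ p := by simpa using hrp
    by_cases hyx : y = x
    · subst hyx
      exact key' y z r p hy hz hzx.symm hr hrU hq hqU hrp'
    · exact key' y x r p hy hx hyx hr hrU hp hpU hrp'
  · exact key' x z p q hx hz hzx.symm hp hpU hq hqU hpq

end Structure

section Independent

open Finset

variable {V : Type*} [Fintype V] {G : SimpleGraph V} {U : Set V} {u₁ u₂ u₃ : V}

theorem nonempty_iso_Mn {n : ℕ} (hn : 18 ≤ n) (hcard : Fintype.card V = n)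
    (hU : ∀ v, v ∈ U ↔ v = u₁ ∨ v = u₂ ∨ v = u₃) (hK : G.IsClique Uᶜ) {x y₁ y₂ y₃ : V}
    (hnd : [x, y₁, y₂, y₃, u₁, u₂, u₃].Nodup)
    (h₁ : ∀ w, G.Adj u₁ w ↔ w = x ∨ w = y₁) (h₂ : ∀ w, G.Adj u₂ w ↔ w = x ∨ w = y₂)
    (h₃ : ∀ w, G.Adj u₃ w ↔ w = x ∨ w = y₃) : Nonempty (G ≃g Mn n) := by
  classical
  let g : Fin 7 → V := [x, y₁, y₂, y₃, u₁, u₂, u₃].get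
  have hg : Function.Injective g := List.nodup_iff_injective_get.1 hnd
  let h : Fin 7 → Fin n := fun i => if i.val < 4 then ⟨i, by omega⟩ else ⟨n - 7 + i, by omega⟩
  have hh : Function.Injective h := by
    intro i j hij
    simp only [h] at hij
    split_ifs at hij <;> simp only [Fin.mk.injEq] at hij <;> omega
  obtain ⟨σ, hσ⟩ := Equiv.Perm.exists_extending_pair ((Fintype.equivFinOfCardEq hcard) ∘ g) h
    ((Equiv.injective _).comp hg) hh
  let e : V ≃ Fin n := (Fintype.equivFinOfCardEq hcard).trans σ
  have he : ∀ i, e (g i) = h i := fun i => by simpa [e] using hσ i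
  have hval : ∀ i v, (e v : ℕ) = h i ↔ v = g i := fun i v => by
    rw [← he, Fin.val_inj, e.apply_eq_iff_eq]
  have e0 : ∀ v, (e v : ℕ) = 0 ↔ v = x := hval 0
  have e1 : ∀ v, (e v : ℕ) = 1 ↔ v = y₁ := hval 1
  have e2 : ∀ v, (e v : ℕ) = 2 ↔ v = y₂ := hval 2
  have e3 : ∀ v, (e v : ℕ) = 3 ↔ v = y₃ := hval 3
  have e4 : ∀ v, (e v : ℕ) = n - 7 + 4 ↔ v = u₁ := hval 4
  have e5 : ∀ v, (e v : ℕ) = n - 7 + 5 ↔ v = u₂ := hval 5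
  have e6 : ∀ v, (e v : ℕ) = n - 7 + 6 ↔ v = u₃ := hval 6
  have hlt : ∀ v, (e v : ℕ) < n - 3 ↔ v ∉ U := fun v => by
    have := (e v).isLt
    rw [hU, ← e4, ← e5, ← e6]
    omega
  have hge : ∀ v, n - 3 ≤ (e v : ℕ) ↔ v ∈ U := fun v => by rw [← not_lt, hlt, not_not]
  have hx : x ∉ U := by rw [hU]; grind
  have hy₁ : y₁ ∉ U := by rw [hU]; grind
  have hy₂ : y₂ ∉ U := by rw [hU]; grind
  have hy₃ : y₃ ∉ U := by rw [hU]; grind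
  have hrow : ∀ a b, (n - 3 ≤ (e a : ℕ) ∧ ((e b : ℕ) = 0 ∨ (e b : ℕ) = (e a : ℕ) - (n - 3) + 1)) ↔
      a ∈ U ∧ G.Adj a b := by
    intro a b
    rw [hge]
    refine and_congr_right fun ha => ?_
    rcases (hU a).1 ha with rfl | rfl | rfl
    · rw [h₁, ← e0, ← e1, (e4 a).2 rfl]
      omega
    · rw [h₂, ← e0, ← e2, (e5 a).2 rfl]
      omega
    · rw [h₃, ← e0, ← e3, (e6 a).2 rfl]
      omega
  refine ⟨⟨e, fun {a b} => ?_⟩⟩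
  rw [Mn, SimpleGraph.fromRel_adj, hrow, hrow, hlt, hlt, e.injective.ne_iff, G.adj_comm b a]
  constructor
  · rintro ⟨hab, (h | h) | (h | h)⟩
    · exact hK h.1 h.2 hab
    · exact h.2
    · exact hK h.2 h.1 hab
    · exact h.2
  · intro hab
    refine ⟨hab.ne, ?_⟩
    tauto

theorem card_le_degree_add_card [DecidableRel G.Adj] {w : V} {T : Finset V}
    (h : ∀ v, v ∉ T → G.Adj w v) : Fintype.card V ≤ G.degree w + T.card := by
  classical
  rw [← SimpleGraph.card_neighborFinset_eq_degree, ← card_univ]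
  refine (card_le_card fun v _ => ?_).trans (card_union_le _ _)
  by_cases hv : v ∈ T
  · simp [hv]
  · simp [h v hv]

theorem exists_isHamiltonianList_or_iso_of_independent [DecidableRel G.Adj] {n : ℕ} (hn : 18 ≤ n)
    (hcard : Fintype.card V = n) (hG : IsOneTough G)
    (hclosed : ∀ u v, u ≠ v → ¬ G.Adj u v → G.degree u + G.degree v < Fintype.card V)
    (hU : ∀ v, v ∈ U ↔ v = u₁ ∨ v = u₂ ∨ v = u₃) (hK : G.IsClique Uᶜ)
    (hdeg : ∀ u ∈ U, G.degree u ≤ 3) (h12 : u₁ ≠ u₂) (h13 : u₁ ≠ u₃) (h23 : u₂ ≠ u₃)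
    (hind : ∀ u ∈ U, ∀ v ∈ U, ¬ G.Adj u v) :
    (∃ l, IsHamiltonianList G l) ∨ Nonempty (G ≃g Mn n) := by
  classical
  have hout : ∀ u ∈ U, ∀ w, G.Adj u w → w ∉ U := fun u hu w h hw => hind u hu w hw h
  have hcardU : #{u₁, u₂, u₃} = 3 := card_eq_three.2 ⟨u₁, u₂, u₃, h12, h13, h23, rfl⟩
  have hin : ∀ v, v ∈ U ↔ v ∈ ({u₁, u₂, u₃} : Finset V) := by simp [hU]
  have hiso : ∀ S : Finset V, S.card ≤ 3 → (∀ w ∈ S, w ∉ U) →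
      ∃ u ∈ U, ∃ w, G.Adj u w ∧ w ∉ S := by
    intro S hS hSU
    obtain ⟨u, hu, w, hw⟩ := hG.exists_adj_of_isolated S {u₁, u₂, u₃}
      (disjoint_left.2 fun v hv hv' => hSU v hv' ((hin v).2 hv)) (by simp) (by omega) (by omega)
    exact ⟨u, (hin u).2 hu, w, hw⟩
  have hdeg2 : ∀ u ∈ U, G.degree u = 2 := by
    intro u hu
    have h2 := hG.two_le_degree (by omega) u
    have h3 := hdeg u hu
    by_contra hne
    obtain ⟨v, hv, w, hvw, hw⟩ := hiso (G.neighborFinset u) (by simp; omega)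
      (fun w hw => hout u hu w (by simpa using hw))
    rw [SimpleGraph.mem_neighborFinset] at hw
    have hwU := hout v hv w hvw
    have hvu : v ≠ u := by rintro rfl; exact hw hvw
    have := card_le_degree_add_card (G := G) (w := w)
      (T := insert w (({u₁, u₂, u₃} : Finset V).erase v)) (fun z hz => by
        simp only [mem_insert, mem_erase, not_or, not_and, ← hin] at hz
        by_cases hzv : z = v
        · exact hzv ▸ hvw.symm
        · exact hK hwU (hz.2 hzv) (Ne.symm hz.1))
    have hc := card_insert_le w (({u₁, u₂, u₃} : Finset V).erase v)
    rw [card_erase_of_mem ((hin v).1 hv), hcardU] at hc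
    have := hclosed u w (by rintro rfl; exact hwU hu) hw
    omega
  have hshare : ∀ u ∈ U, ∀ v ∈ U, u ≠ v → ∀ w, G.Adj u w → G.Adj v w → ∀ z ∈ U, G.Adj z w := by
    intro u hu v hv huv w huw hvw z hz
    by_contra hzw
    have hwU := hout u hu w huw
    have hzu : z ≠ u := by rintro rfl; exact hzw huw
    have hzv : z ≠ v := by rintro rfl; exact hzw hvw
    have := card_le_degree_add_card (G := G) (w := w) (T := {w, z}) (fun y hy => by
        simp only [mem_insert, mem_singleton, not_or] at hy
        by_cases hyU : y ∈ U
        · have : y = u ∨ y = v := by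
            rw [hU] at hyU hu hv hz
            grind
          rcases this with rfl | rfl
          · exact huw.symm
          · exact hvw.symm
        · exact hK hwU hyU (Ne.symm hy.1))
    have hc : #{w, z} ≤ 2 := card_le_two
    have := hclosed z w (by rintro rfl; exact hwU hz) hzw
    rw [hdeg2 z hz] at this
    omega
  have hnbr : ∀ u ∈ U, ∃ a b, a ≠ b ∧ ∀ w, G.Adj u w ↔ w = a ∨ w = b := by
    intro u hu
    obtain ⟨a, b, hab, h⟩ := card_eq_two.1 (hdeg2 u hu)
    exact ⟨a, b, hab, fun w => by rw [← SimpleGraph.mem_neighborFinset, h]; simp⟩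
  have hu₁ : u₁ ∈ U := by simp [hU]
  have hu₂ : u₂ ∈ U := by simp [hU]
  have hu₃ : u₃ ∈ U := by simp [hU]
  by_cases hx : ∃ x, ∀ z ∈ U, G.Adj z x
  · right
    obtain ⟨x, hx⟩ := hx
    have hxU : x ∉ U := hout u₁ hu₁ x (hx u₁ hu₁)
    have hnbr' : ∀ u ∈ U, ∃ y, y ≠ x ∧ y ∉ U ∧ ∀ w, G.Adj u w ↔ w = x ∨ w = y := by
      intro u hu
      obtain ⟨a, b, hab, h⟩ := hnbr u hu
      rcases (h x).1 (hx u hu) with rfl | rfl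
      · exact ⟨b, hab.symm, hout u hu b ((h b).2 (Or.inr rfl)), h⟩
      · exact ⟨a, hab, hout u hu a ((h a).2 (Or.inl rfl)), fun w => by rw [h, or_comm]⟩
    obtain ⟨y₁, hy₁, hyU₁, n₁⟩ := hnbr' u₁ hu₁
    obtain ⟨y₂, hy₂, hyU₂, n₂⟩ := hnbr' u₂ hu₂
    obtain ⟨y₃, hy₃, hyU₃, n₃⟩ := hnbr' u₃ hu₃
    have hyy : ∀ S : Finset V, S.card ≤ 3 → S = {x, y₁, y₂, y₃} → False := by
      rintro S hS rfl
      obtain ⟨u, hu, w, hw, hwS⟩ := hiso _ hS (by simp [hxU, hyU₁, hyU₂, hyU₃])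
      simp only [mem_insert, mem_singleton, not_or] at hwS
      rcases (hU u).1 hu with rfl | rfl | rfl
      · rw [n₁] at hw; tauto
      · rw [n₂] at hw; tauto
      · rw [n₃] at hw; tauto
    have hy12 : y₁ ≠ y₂ := by
      rintro rfl
      exact hyy {x, y₁, y₃} card_le_three (by simp)
    have hy13 : y₁ ≠ y₃ := by
      rintro rfl
      exact hyy {x, y₂, y₁} card_le_three (by ext; simp)
    have hy23 : y₂ ≠ y₃ := by
      rintro rfl
      exact hyy {x, y₁, y₂} card_le_three (by simp)
    refine nonempty_iso_Mn hn hcard hU hK ?_ n₁ n₂ n₃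
    rw [hU] at hxU hyU₁ hyU₂ hyU₃
    simp only [not_or] at hxU hyU₁ hyU₂ hyU₃
    simp [h12, h13, h23, hy12, hy13, hy23, hxU, hyU₁, hyU₂, hyU₃, hy₁.symm, hy₂.symm, hy₃.symm]
  · left
    have hdis : ∀ u ∈ U, ∀ v ∈ U, u ≠ v → ∀ w, G.Adj u w → ¬ G.Adj v w :=
      fun u hu v hv huv w h1 h2 => hx ⟨w, hshare u hu v hv huv w h1 h2⟩
    obtain ⟨a₁, b₁, hab₁, n₁⟩ := hnbr u₁ hu₁
    obtain ⟨a₂, b₂, hab₂, n₂⟩ := hnbr u₂ hu₂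
    obtain ⟨a₃, b₃, hab₃, n₃⟩ := hnbr u₃ hu₃
    have d12 := hdis u₁ hu₁ u₂ hu₂ h12
    have d13 := hdis u₁ hu₁ u₃ hu₃ h13
    have d23 := hdis u₂ hu₂ u₃ hu₃ h23
    have o₁ := hout u₁ hu₁
    have o₂ := hout u₂ hu₂
    have o₃ := hout u₃ hu₃
    simp only [n₁, n₂, n₃, forall_eq_or_imp, forall_eq, not_or] at d12 d13 d23 o₁ o₂ o₃
    exact exists_isHamiltonianList_of_three hK (fun v hv => (hU v).1 hv) (by simp [h12, h13, h23])
      (by simp [hab₁, hab₂, hab₃, d12, d13, d23]) (by simp [hu₁, hu₂, hu₃])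
      (by simp [o₁, o₂, o₃]) ((n₁ a₁).2 (Or.inl rfl)) ((n₁ b₁).2 (Or.inr rfl))
      ((n₂ a₂).2 (Or.inl rfl)) ((n₂ b₂).2 (Or.inr rfl)) ((n₃ a₃).2 (Or.inl rfl))
      ((n₃ b₃).2 (Or.inr rfl)) (by omega)

theorem exists_isHamiltonianList_or_iso_of_clique_compl_triple [DecidableRel G.Adj] {n : ℕ}
    (hn : 18 ≤ n) (hcard : Fintype.card V = n) (hG : IsOneTough G)
    (hclosed : ∀ u v, u ≠ v → ¬ G.Adj u v → G.degree u + G.degree v < Fintype.card V)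
    (hU : ∀ v, v ∈ U ↔ v = u₁ ∨ v = u₂ ∨ v = u₃) (hK : G.IsClique Uᶜ)
    (hdeg : ∀ u ∈ U, G.degree u ≤ 3) (h12 : u₁ ≠ u₂) (h13 : u₁ ≠ u₃) (h23 : u₂ ≠ u₃) :
    (∃ l, IsHamiltonianList G l) ∨ Nonempty (G ≃g Mn n) := by
  have hV : 10 ≤ Fintype.card V := by omega
  have hs : ∀ u v, ¬ G.Adj u v → ¬ G.Adj v u := fun u v h h' => h h'.symm
  by_cases a12 : G.Adj u₁ u₂ <;> by_cases a13 : G.Adj u₁ u₃ <;> by_cases a23 : G.Adj u₂ u₃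
  · exact .inl (exists_isHamiltonianList_of_triangle hG hV hU hK a12 a23 a13)
  · exact .inl (exists_isHamiltonianList_of_two_edges hG hV (u₁ := u₂) (u₂ := u₁) (u₃ := u₃)
      (fun v => by rw [hU]; tauto) hK h23 a12.symm a13 a23)
  · exact .inl (exists_isHamiltonianList_of_two_edges hG hV hU hK h13 a12 a23 a13)
  · exact .inl (exists_isHamiltonianList_of_one_edge hG hV hU hK h13 h23 a12 a13 a23)
  · exact .inl (exists_isHamiltonianList_of_two_edges hG hV (u₁ := u₁) (u₂ := u₃) (u₃ := u₂)
      (fun v => by rw [hU]; tauto) hK h12 a13 a23.symm a12)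
  · exact .inl (exists_isHamiltonianList_of_one_edge hG hV (u₁ := u₁) (u₂ := u₃) (u₃ := u₂)
      (fun v => by rw [hU]; tauto) hK h12 h23.symm a13 a12 (hs _ _ a23))
  · exact .inl (exists_isHamiltonianList_of_one_edge hG hV (u₁ := u₂) (u₂ := u₃) (u₃ := u₁)
      (fun v => by rw [hU]; tauto) hK h12.symm h13.symm a23 (hs _ _ a12) (hs _ _ a13))
  · refine exists_isHamiltonianList_or_iso_of_independent hn hcard hG hclosed hU hK hdeg h12 h13 h23
      fun u hu v hv => ?_
    rcases (hU u).1 hu with rfl | rfl | rfl <;> rcases (hU v).1 hv with rfl | rfl | rfl <;>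
      first | assumption | exact G.loopless.irrefl _ | exact hs _ _ ‹_›

end Independent

section Counting

open Finset

variable {V : Type*} [Fintype V] {G : SimpleGraph V}

/-- In a degree-closed graph some clique contains all vertices of large degree and is maximal, so
that vertices outside it have small degree. -/
theorem exists_clique_of_closed [DecidableEq V] [DecidableRel G.Adj]
    (hclosed : ∀ u v, u ≠ v → ¬ G.Adj u v → G.degree u + G.degree v < Fintype.card V) :
    ∃ C : Finset V, G.IsClique C ∧
      ∀ u ∉ C, G.degree u ≤ Cᶜ.card ∧ 2 * G.degree u + 1 ≤ Fintype.card V := by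
  have h0 : G.IsClique ((univ.filter fun v => Fintype.card V ≤ 2 * G.degree v : Finset V) :
      Set V) := by
    intro u hu v hv huv
    by_contra hadj
    have := hclosed u v huv hadj
    simp only [coe_filter, mem_univ, true_and, Set.mem_ofPred_eq] at hu hv
    omega
  obtain ⟨C, hC0, hC⟩ := Finite.exists_le_maximal (p := fun C : Finset V => G.IsClique C) h0
  refine ⟨C, hC.prop, fun u hu => ⟨?_, ?_⟩⟩
  · obtain ⟨w, hw, huw⟩ : ∃ w ∈ C, ¬ G.Adj u w := by
      by_contra! hcon
      refine hu (hC.2 (y := insert u C) ?_ (by simp) (mem_insert_self u C))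
      change G.IsClique ((insert u C : Finset V) : Set V)
      rw [coe_insert]
      exact hC.prop.insert fun b hb _ => hcon b hb
    have h1 := hclosed u w (by rintro rfl; exact hu hw) huw
    have h2 : C.card ≤ G.degree w + 1 := by
      rw [← SimpleGraph.card_neighborFinset_eq_degree]
      have : C.erase w ⊆ G.neighborFinset w := fun v hv => by
        obtain ⟨hvw, hv⟩ := mem_erase.1 hv
        simpa using hC.prop hw hv hvw.symm
      have := card_le_card this
      rw [card_erase_of_mem hw] at this
      omega
    have := card_add_card_compl C
    omega
  · by_contra! h
    exact hu (hC0 (by simp; omega))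

/-- The degrees inside `C` are controlled by `|C|` and the degrees outside `C`. -/
theorem sum_degree_add_card_le [DecidableEq V] [DecidableRel G.Adj] (C : Finset V) :
    (∑ v ∈ C, G.degree v + C.card ≤ C.card * C.card + ∑ u ∈ Cᶜ, G.degree u) := by
  have h1 : ∀ v ∈ C, G.degree v + 1 ≤ C.card + #{u ∈ Cᶜ | G.Adj v u} := by
    intro v hv
    rw [← SimpleGraph.card_neighborFinset_eq_degree]
    have : insert v (G.neighborFinset v) ⊆ C ∪ {u ∈ Cᶜ | G.Adj v u} := by
      intro w hw
      by_cases hwC : w ∈ C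
      · simp [hwC]
      · have : w ≠ v := by rintro rfl; exact hwC hv
        simp only [mem_insert, this, false_or, SimpleGraph.mem_neighborFinset] at hw
        simp [hwC, hw]
    have h2 := (card_le_card this).trans (card_union_le _ _)
    rwa [card_insert_of_notMem (by simp)] at h2
  have h2 : ∑ v ∈ C, #{u ∈ Cᶜ | G.Adj v u} ≤ ∑ u ∈ Cᶜ, G.degree u := by
    have := sum_card_bipartiteAbove_eq_sum_card_bipartiteBelow (s := C) (t := Cᶜ) G.Adj
    simp only [bipartiteAbove, bipartiteBelow] at this
    refine this.trans_le (sum_le_sum fun u _ => ?_)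
    rw [← SimpleGraph.card_neighborFinset_eq_degree]
    refine card_le_card fun w hw => ?_
    simpa using (mem_filter.1 hw).2.symm
  calc ∑ v ∈ C, G.degree v + C.card = ∑ v ∈ C, (G.degree v + 1) := by
        rw [sum_add_distrib]; simp
    _ ≤ ∑ v ∈ C, (C.card + #{u ∈ Cᶜ | G.Adj v u}) := sum_le_sum h1
    _ = C.card * C.card + ∑ v ∈ C, #{u ∈ Cᶜ | G.Adj v u} := by rw [sum_add_distrib]; simp
    _ ≤ _ := by omega

theorem lt_sum_degree_of_lt_specRad [DecidableRel G.Adj] {n d : ℕ} (hn : Fintype.card V = n)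
    (h4 : 4 ≤ n) (hd : d + 3 ≤ n) (hmin : ∀ v, d ≤ G.degree v) (hrho : (n : ℝ) - 4 < specRad G) :
    ((n : ℤ) - 4) * (n - 3 - d) + d * (n - 1) < ∑ v, (G.degree v : ℤ) := by
  have : Nonempty V := Fintype.card_pos_iff.1 (by omega)
  have h1 := specRad_sq_le G d hmin
  rw [hn] at h1
  have hd' : (d : ℝ) + 3 ≤ n := by exact_mod_cast hd
  have h4' : (4 : ℝ) ≤ n := by exact_mod_cast h4
  have h2 : ((n : ℝ) - 4) * (n - 3 - d) < specRad G ^ 2 - ((d : ℝ) - 1) * specRad G := by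
    nlinarith [mul_pos (sub_pos.2 hrho) (by linarith : 0 < specRad G + (n - 3 - d))]
  have h3 : ((n : ℝ) - 4) * (n - 3 - d) + d * (n - 1) < ∑ v, (G.degree v : ℝ) := by linarith
  exact_mod_cast h3

theorem exceptional_parameters {n t s k σ D : ℤ} (hn : 18 ≤ n) (ht : t + s = n) (ht0 : 0 ≤ t)
    (hs : 4 ≤ s) (hk : 2 * k ≤ n - 1) (h1 : D + t ≤ t * t + 2 * σ) (h2 : D ≤ t * (n - 1) + σ)
    (h3 : σ ≤ s * s) (h4 : σ ≤ s * k) (hD : (n - 4) * (n - 5) + 2 * (n - 1) < D) :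
    (n = 18 ∧ s = 8 ∧ 64 ≤ σ) ∨ (n = 19 ∧ s = 9 ∧ 79 ≤ σ) ∨ (n = 19 ∧ s = 10 ∧ 88 ≤ σ) := by
  obtain rfl : t = n - s := by omega
  rcases lt_or_ge (2 * s) n with hsn | hsn
  · have h5 : n * (2 * s - 6) < 3 * s * s + s - 18 := by nlinarith
    have h6 : s ≤ 9 := by
      by_contra! h
      nlinarith
    have h7 : n ≤ 19 := by
      interval_cases s <;> omega
    interval_cases n <;> interval_cases s <;> omega
  · have h5 : n ≤ 21 := by
      by_contra! h
      nlinarith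
    have h6 : k ≤ 10 := by omega
    interval_cases n
    · have : k ≤ 8 := by omega
      have : σ ≤ s * 8 := by nlinarith
      have : s ≤ 18 := by omega
      interval_cases s <;> omega
    · have : σ ≤ s * 9 := by nlinarith
      have : s ≤ 19 := by omega
      interval_cases s <;> omega
    · have : k ≤ 9 := by omega
      have : σ ≤ s * 9 := by nlinarith
      have : s ≤ 20 := by omega
      interval_cases s <;> omega
    · have : σ ≤ s * 10 := by nlinarith
      have : s ≤ 21 := by omega
      interval_cases s <;> omega

/-- A degree-closed graph of large spectral radius is a clique up to at most three vertices. -/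
theorem card_compl_le_three [DecidableEq V] [DecidableRel G.Adj] {n : ℕ}
    (hcard : Fintype.card V = n) (hn : 18 ≤ n) (hmin : ∀ v, 2 ≤ G.degree v)
    (hrho : (n : ℝ) - 4 < specRad G) (C : Finset V) (hK : G.IsClique C)
    (hC : ∀ u ∉ C, G.degree u ≤ Cᶜ.card ∧ 2 * G.degree u + 1 ≤ Fintype.card V) :
    Cᶜ.card ≤ 3 := by
  by_contra! hs
  have hts := card_add_card_compl C
  have h1 := sum_degree_add_card_le (G := G) C
  have hsplit := sum_add_sum_compl C fun v => G.degree v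
  have h2 : ∑ v ∈ C, G.degree v ≤ C.card * (n - 1) := by
    refine sum_le_card_nsmul _ _ _ fun v _ => ?_
    have := G.degree_lt_card_verts v
    omega
  have hdeg : ∀ k, (∀ u ∈ Cᶜ, G.degree u ≤ k) → ∑ u ∈ Cᶜ, G.degree u ≤ Cᶜ.card * k :=
    fun k hk => sum_le_card_nsmul _ _ _ hk
  have hle : ∀ u ∈ Cᶜ, G.degree u ≤ Cᶜ.card := fun u hu => (hC u (by simpa using hu)).1
  have hle' : ∀ u ∈ Cᶜ, G.degree u ≤ (n - 1) / 2 := fun u hu => by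
    have := (hC u (by simpa using hu)).2
    omega
  have h3 := hdeg _ hle
  have h4 := hdeg _ hle'
  have hlow : ∀ d k, (∀ u ∈ Cᶜ, G.degree u ≤ k) → d + 1 ≤ C.card →
      d + (Cᶜ.card - 1) * k ≤ ∑ u ∈ Cᶜ, G.degree u → ∀ v, d ≤ G.degree v := by
    intro d k hk hdC hsum v
    by_cases hv : v ∈ C
    · have : C ⊆ insert v (G.neighborFinset v) := fun w hw => by
        by_cases hwv : w = v
        · simp [hwv]
        · simpa [hwv] using hK hv hw (Ne.symm hwv)
      have := (card_le_card this).trans (card_insert_le _ _)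
      rw [SimpleGraph.card_neighborFinset_eq_degree] at this
      omega
    · have hv' : v ∈ Cᶜ := by simpa using hv
      have h5 : ∑ u ∈ Cᶜ.erase v, G.degree u ≤ (Cᶜ.erase v).card * k :=
        sum_le_card_nsmul _ _ _ fun u hu => hk u (mem_of_mem_erase hu)
      rw [card_erase_of_mem hv'] at h5
      have := add_sum_erase Cᶜ (fun u => G.degree u) hv'
      omega
  have hD := lt_sum_degree_of_lt_specRad hcard (by omega) (by omega) hmin hrho
  have hspec : ∀ d, d + 3 ≤ n → (∀ v, d ≤ G.degree v) → _ := fun d hd hd' =>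
    lt_sum_degree_of_lt_specRad (d := d) hcard (by omega) hd hd' hrho
  simp only [← Nat.cast_sum, ← hsplit] at hD hspec
  rw [hcard] at hts
  generalize ∑ u ∈ Cᶜ, G.degree u = σ at *
  generalize ∑ v ∈ C, G.degree v = τ at *
  generalize Cᶜ.card = s at *
  generalize C.card = t at *
  have := exceptional_parameters (n := n) (t := t) (s := s) (k := ((n - 1) / 2 : ℕ)) (σ := σ)
    (D := (τ + σ : ℕ)) (by omega) (by omega) (by omega) (by omega) (by omega)
    (by push_cast; exact_mod_cast (by omega : τ + σ + t ≤ t * t + 2 * σ))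
    (by
      have : ((n : ℤ) - 1) = ((n - 1 : ℕ) : ℤ) := by omega
      rw [this]
      exact_mod_cast (by omega : τ + σ ≤ t * (n - 1) + σ))
    (by exact_mod_cast h3) (by exact_mod_cast h4) (by push_cast at hD ⊢; linarith)
  rcases this with ⟨hn', hs', hσ⟩ | ⟨hn', hs', hσ⟩ | ⟨hn', hs', hσ⟩
  · obtain rfl : n = 18 := by omega
    obtain rfl : s = 8 := by omega
    obtain rfl : t = 10 := by omega
    have := hspec 8 (by omega) (hlow 8 8 hle (by omega) (by omega))
    omega
  · obtain rfl : n = 19 := by omega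
    obtain rfl : s = 9 := by omega
    obtain rfl : t = 10 := by omega
    have := hspec 7 (by omega) (hlow 7 9 hle (by omega) (by omega))
    omega
  · obtain rfl : n = 19 := by omega
    obtain rfl : s = 10 := by omega
    obtain rfl : t = 9 := by omega
    have := hspec 7 (by omega) (hlow 7 9 hle' (by omega) (by omega))
    omega

end Counting

section Main

open Finset

theorem sub_four_lt_specRad_Mn {n : ℕ} (hn : 4 ≤ n) : (n : ℝ) - 4 < specRad (Mn n) := by
  let C : Finset (Fin n) := univ.filter fun i => (i : ℕ) < n - 3
  have hC : (Mn n).IsClique C := by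
    intro a ha b hb hab
    simp only [C, coe_filter, mem_univ, true_and, Set.mem_ofPred_eq] at ha hb
    simp [Mn, hab, ha, hb]
  have hcard : C.card = n - 3 := by
    simp only [C, Fin.card_filter_val_lt]
    omega
  have h := card_sub_one_lt_specRad (Mn n) hC (u := ⟨n - 3, by omega⟩) (c := ⟨0, by omega⟩)
    (by simp [C]) (by simp [C]; omega) (by simp [Mn]; omega)
  rw [hcard, Nat.cast_sub (by omega)] at h
  push_cast at h
  linarith

variable {V : Type*} [Fintype V]

/-- Every graph without a Hamiltonian cycle extends to one which is edge-maximal with that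
property; such a graph is degree-closed. -/
theorem exists_le_closed_of_not_isHamiltonianList (hV : 3 ≤ Fintype.card V) {G : SimpleGraph V}
    (hG : ¬ ∃ l, IsHamiltonianList G l) :
    ∃ H : SimpleGraph V, G ≤ H ∧ (¬ ∃ l, IsHamiltonianList H l) ∧
      ∀ [DecidableRel H.Adj] (u v : V), u ≠ v → ¬ H.Adj u v →
        H.degree u + H.degree v < Fintype.card V := by
  obtain ⟨H, hGH, hmax⟩ :=
    Finite.exists_le_maximal (p := fun H : SimpleGraph V => ¬ ∃ l, IsHamiltonianList H l) hG
  refine ⟨H, hGH, hmax.prop, fun u v huv hadj => ?_⟩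
  refine degree_add_degree_lt_of_add_edge hV hmax.prop ?_
  by_contra h
  have hle := hmax.le_of_ge h le_sup_left
  exact hadj (hle (by simp [SimpleGraph.edge_adj, huv]))

theorem iso_of_closed {n : ℕ} (hn : 18 ≤ n) (hcard : Fintype.card V = n) {H : SimpleGraph V}
    [DecidableRel H.Adj] (htough : IsOneTough H) (hrho : (n : ℝ) - 4 < specRad H)
    (hclosed : ∀ u v, u ≠ v → ¬ H.Adj u v → H.degree u + H.degree v < Fintype.card V)
    (hH : ¬ ∃ l, IsHamiltonianList H l) : Nonempty (H ≃g Mn n) := by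
  classical
  have hmin := htough.two_le_degree (by omega)
  obtain ⟨C, hK, hC⟩ := exists_clique_of_closed hclosed
  have hcompl := card_compl_le_three hcard hn hmin hrho C hK hC
  have hK' : H.IsClique ((Cᶜ : Finset V) : Set V)ᶜ := by simpa using hK
  have hdeg : ∀ u ∈ Cᶜ, H.degree u ≤ Cᶜ.card := fun u hu => (hC u (by simpa using hu)).1
  interval_cases hs : Cᶜ.card
  · have hall : ∀ v, v ∈ C := by simpa [Finset.eq_univ_iff_forall] using hs
    have : Nonempty V := Fintype.card_pos_iff.1 (by omega)
    exact absurd (exists_isHamiltonianList_of_clique hK [Classical.arbitrary V] (by simp) (by simp)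
      (by simp) (fun v hv => absurd (hall v) hv) (by simp [hall]) (by simp [hall])
      (by simp; omega)) hH
  · obtain ⟨u, hu⟩ := card_eq_one.1 hs
    have := hdeg u (by simp [hu])
    have := hmin u
    omega
  · obtain ⟨u₁, u₂, h12, hu⟩ := card_eq_two.1 hs
    exact absurd (exists_isHamiltonianList_of_clique_compl_pair htough (by omega) h12
      (U := ((Cᶜ : Finset V) : Set V)) (by simp [hu]) hK') hH
  · obtain ⟨u₁, u₂, u₃, h12, h13, h23, hu⟩ := card_eq_three.1 hs
    exact (exists_isHamiltonianList_or_iso_of_clique_compl_triple hn hcard htough hclosed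
      (U := ((Cᶜ : Finset V) : Set V)) (u₁ := u₁) (u₂ := u₂) (u₃ := u₃) (by simp [hu]) hK'
      (fun u h => hdeg u (by exact_mod_cast h)) h12 h13 h23).resolve_left hH

end Main

/-- A connected non-complete graph of order `n ≥ 18` with toughness `t(G) ≥ 1`
and `ρ(G) ≥ ρ(M_n)` contains a Hamiltonian cycle, unless `G ≅ M_n`. -/
theorem stmt2 {V : Type*} [Fintype V] [DecidableEq V] (n : ℕ) (hn : 18 ≤ n)
    (G : SimpleGraph V) (hcard : Fintype.card V = n)
    (hconn : G.Connected) (hnc : G ≠ ⊤)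
    (htough : 1 ≤ toughness G)
    (hrho : specRad (Mn n) ≤ specRad G) :
    G.IsHamiltonian ∨ Nonempty (G ≃g Mn n) := by
  classical
  by_cases hG : ∃ l, IsHamiltonianList G l
  · obtain ⟨l, hl⟩ := hG
    exact Or.inl (hl.isHamiltonian (by omega))
  right
  have : Nonempty V := hconn.nonempty
  have hM := sub_four_lt_specRad_Mn (n := n) (by omega)
  obtain ⟨H, hGH, hH, hclosed⟩ := exists_le_closed_of_not_isHamiltonianList (by omega) hG
  have hmono := specRad_mono hGH
  obtain ⟨e⟩ := iso_of_closed hn hcard ((isOneTough_of_one_le_toughness htough).mono hGH)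
    (by linarith) hclosed hH
  obtain rfl | hlt := hGH.eq_or_lt
  · exact ⟨e⟩
  · have h1 := specRad_lt_of_lt hconn hlt
    have h2 := specRad_le_of_iso e
    linarith
end

section
/- Let H be a balanced bipartite graph with parts X and Y, |X| = |Y| = n, which is closed in the sense that every pair of non-adjacent vertices u ∈ X and v ∈ Y satisfies d_H(u) + d_H(v) ≤ n. Let X_0 = {u ∈ X : d_H(u) > n/2} and Y_0 = {v ∈ Y : d_H(v) > n/2}, and suppose |Y_0| > n/2. Then every vertex u ∈ X \ X_0 satisfies d_H(u) ≤ n − |X_0|, and symmetrically (if |X_0| > n/2) every vertex v ∈ Y \ Y_0 satisfies d_H(v) ≤ n − |Y_0|. -/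
open SimpleGraph

/-- If every non-adjacent pair `u ∈ X`, `v ∈ Y` satisfies `d(u) + d(v) ≤ n`, and more than `n / 2`
vertices of `Y` have degree greater than `n / 2`, then a vertex of `X` of degree at most `n / 2` has
degree at most `n` minus the number of vertices of `X` of degree greater than `n / 2`. -/
theorem ncard_neighborSet_le_sub_of_closed {V : Type*} [Finite V] {n : ℕ} {H : SimpleGraph V}
    {X Y : Set V}
    (hclosed : ∀ u ∈ X, ∀ v ∈ Y, ¬ H.Adj u v →
      (H.neighborSet u).ncard + (H.neighborSet v).ncard ≤ n)
    (hbig : (n : ℝ) / 2 < ({v ∈ Y | (n : ℝ) / 2 < ((H.neighborSet v).ncard : ℝ)}.ncard : ℝ))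
    {u : V} (huX : u ∈ X) (hu : ((H.neighborSet u).ncard : ℝ) ≤ n / 2) :
    (H.neighborSet u).ncard ≤
      n - {x ∈ X | (n : ℝ) / 2 < ((H.neighborSet x).ncard : ℝ)}.ncard := by
  have hlt : (H.neighborSet u).ncard <
      {v ∈ Y | (n : ℝ) / 2 < ((H.neighborSet v).ncard : ℝ)}.ncard := by
    exact_mod_cast hu.trans_lt hbig
  obtain ⟨v, ⟨hvY, hv⟩, huv⟩ := Set.exists_mem_notMem_of_ncard_lt_ncard hlt
  have hsub : {x ∈ X | (n : ℝ) / 2 < ((H.neighborSet x).ncard : ℝ)} ⊆ H.neighborSet v := by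
    rintro x ⟨hxX, hx⟩
    by_contra hxv
    have hle : ((H.neighborSet x).ncard : ℝ) + (H.neighborSet v).ncard ≤ n := by
      exact_mod_cast hclosed x hxX v hvY fun h => hxv h.symm
    linarith
  have hcard := Set.ncard_le_ncard hsub
  have hsum := hclosed u huX v hvY huv
  omega

/-- In a closed balanced bipartite graph `H` (non-adjacent `u ∈ X`, `v ∈ Y`
satisfy `d(u) + d(v) ≤ n`), if `|Y₀| > n/2` then every `u ∈ X \ X₀` has `d(u) ≤ n - |X₀|`,
and symmetrically if `|X₀| > n/2` then every `v ∈ Y \ Y₀` has `d(v) ≤ n - |Y₀|`. -/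
theorem stmt11 {V : Type*} [Fintype V] (n : ℕ)
    (H : SimpleGraph V) (X Y : Set V)
    (hbip : IsBipartition H X Y) (hX : X.ncard = n) (hY : Y.ncard = n)
    (hclosed : ∀ u ∈ X, ∀ v ∈ Y, ¬ H.Adj u v →
      (H.neighborSet u).ncard + (H.neighborSet v).ncard ≤ n)
    (X0 Y0 : Set V)
    (hX0 : X0 = {u ∈ X | (n : ℝ) / 2 < ((H.neighborSet u).ncard : ℝ)})
    (hY0 : Y0 = {v ∈ Y | (n : ℝ) / 2 < ((H.neighborSet v).ncard : ℝ)})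
    (hY0big : (n : ℝ) / 2 < (Y0.ncard : ℝ)) :
    (∀ u ∈ X \ X0, (H.neighborSet u).ncard ≤ n - X0.ncard) ∧
      ((n : ℝ) / 2 < (X0.ncard : ℝ) →
        ∀ v ∈ Y \ Y0, (H.neighborSet v).ncard ≤ n - Y0.ncard) := by
  subst hX0 hY0
  refine ⟨fun u hu => ncard_neighborSet_le_sub_of_closed hclosed hY0big hu.1 ?_,
    fun hX0big v hv => ncard_neighborSet_le_sub_of_closed (fun v hv u hu huv => ?_) hX0big hv.1 ?_⟩
  · exact not_lt.1 fun h => hu.2 ⟨hu.1, h⟩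
  · rw [add_comm]
    exact hclosed u hu v hv fun h => huv h.symm
  · exact not_lt.1 fun h => hv.2 ⟨hv.1, h⟩
end
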